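/- arXiv:1501.02045 — 4 statements merged into one kernel-verified Lean document; each statement's English description precedes it below -/
import Mathlib

section
/- Let r₁, …, rₙ be complex numbers with 0 < |r₁| ≤ |r₂| ≤ ⋯ ≤ |rₙ|, and set R_n = |r₁| + ⋯ + |rₙ|, R_{n−1} = |r₁| + ⋯ + |r_{n−1}|. Define T_n = |rₙ| − R_{n−1} if R_{n−1} ≤ |rₙ|, and T_n = 0 otherwise. Then the set { ∑_{j=1}^n c_j r_j : c_j ∈ ℂ, |c_j| = 1 } is exactly the closed annulus { z ∈ ℂ : T_n ≤ |z| ≤ R_n }. -/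
open Finset

/-- Every complex number is its norm times a unit complex number. -/
lemma exists_norm_one_eq_norm_mul (z : ℂ) : ∃ u : ℂ, ‖u‖ = 1 ∧ z = ‖z‖ * u :=
  ⟨Complex.exp (z.arg * Complex.I), Complex.norm_exp_ofReal_mul_I _,
    (Complex.norm_mul_exp_arg_mul_I z).symm⟩

/-- A triangle with side lengths `‖z‖`, `‖w‖` and `s` can be built on the side `z`. -/
lemma exists_norm_one_norm_sub_mul_eq (z w : ℂ) {s : ℝ} (hs : |‖z‖ - ‖w‖| ≤ s)
    (hs' : s ≤ ‖z‖ + ‖w‖) : ∃ c : ℂ, ‖c‖ = 1 ∧ ‖z - c * w‖ = s := by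
  obtain ⟨u, hu, hz⟩ := exists_norm_one_eq_norm_mul z
  obtain ⟨v, hv, hw⟩ := exists_norm_one_eq_norm_mul w
  have hv0 : v ≠ 0 := by
    rintro rfl
    simp at hv
  let f : ℝ → ℝ := fun θ => ‖(‖z‖ : ℂ) - ‖w‖ * Complex.exp (θ * Complex.I)‖
  have hf : ContinuousOn f (Set.Icc 0 Real.pi) := by fun_prop
  have hf_zero : f 0 = |‖z‖ - ‖w‖| := by
    simp only [f, Complex.ofReal_zero, zero_mul, Complex.exp_zero, mul_one]
    rw [← Complex.ofReal_sub, Complex.norm_real, Real.norm_eq_abs]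
  have hf_pi : f Real.pi = ‖z‖ + ‖w‖ := by
    simp only [f, Complex.exp_pi_mul_I, mul_neg, mul_one, sub_neg_eq_add]
    rw [← Complex.ofReal_add, Complex.norm_real, Real.norm_of_nonneg (by positivity)]
  obtain ⟨θ, -, hθ⟩ := intermediate_value_Icc Real.pi_pos.le hf
    ⟨hf_zero.trans_le hs, hs'.trans_eq hf_pi.symm⟩
  refine ⟨u / v * Complex.exp (θ * Complex.I), ?_, ?_⟩
  · rw [norm_mul, norm_div, hu, hv, Complex.norm_exp_ofReal_mul_I]
    norm_num
  · have key : z - u / v * Complex.exp (θ * Complex.I) * w =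
        u * (‖z‖ - ‖w‖ * Complex.exp (θ * Complex.I)) := by
      conv_lhs => rw [hz, hw]
      field_simp
    rw [key, norm_mul, hu, one_mul]
    exact hθ

/-- A point of the annulus is a sum of rotated copies of the `r j`. -/
lemma exists_norm_one_eq_sum_mul (n : ℕ) (r : Fin (n + 1) → ℂ)
    (hmono : Monotone fun j => ‖r j‖) (z : ℂ)
    (hlower : ‖r (Fin.last n)‖ ≤ ‖z‖ + ∑ i : Fin n, ‖r i.castSucc‖)
    (hupper : ‖z‖ ≤ ∑ j, ‖r j‖) :
    ∃ c : Fin (n + 1) → ℂ, (∀ j, ‖c j‖ = 1) ∧ z = ∑ j, c j * r j := by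
  induction n generalizing z with
  | zero =>
    replace hlower : ‖r 0‖ ≤ ‖z‖ := by simpa using hlower
    replace hupper : ‖z‖ ≤ ‖r 0‖ := by simpa using hupper
    obtain ⟨c, hc, h⟩ := exists_norm_one_norm_sub_mul_eq z (r 0) (s := 0)
      (by rw [le_antisymm hupper hlower]; simp) (by positivity)
    refine ⟨fun _ => c, fun _ => hc, ?_⟩
    simpa [sub_eq_zero] using h
  | succ n ih =>
    rw [Fin.sum_univ_castSucc] at hupper
    have hle : ‖r (Fin.last n).castSucc‖ ≤ ‖r (Fin.last (n + 1))‖ := hmono (Fin.le_last _)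
    have hsum : ∑ i : Fin (n + 1), ‖r i.castSucc‖ =
      ∑ i : Fin n, ‖r i.castSucc.castSucc‖ + ‖r (Fin.last n).castSucc‖ :=
      Fin.sum_univ_castSucc _
    have hnonneg : 0 ≤ ∑ i : Fin n, ‖r i.castSucc.castSucc‖ := by positivity
    have hz := norm_nonneg z
    have hlast := norm_nonneg (r (Fin.last (n + 1)))
    obtain ⟨c, hc, h⟩ := exists_norm_one_norm_sub_mul_eq z (r (Fin.last (n + 1)))
      (s := max |‖z‖ - ‖r (Fin.last (n + 1))‖|
        (‖r (Fin.last n).castSucc‖ - ∑ i : Fin n, ‖r i.castSucc.castSucc‖))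
      (le_max_left _ _)
      (max_le (abs_le.2 ⟨by linarith, by linarith⟩) (by linarith))
    obtain ⟨d, hd, hsumd⟩ := ih (fun i => r i.castSucc)
      (hmono.comp Fin.strictMono_castSucc.monotone) (z - c * r (Fin.last (n + 1)))
      (by rw [h, ← sub_le_iff_le_add]; exact le_max_right _ _)
      (by rw [h]; exact max_le (abs_le.2 ⟨by linarith, by linarith⟩) (by linarith))
    refine ⟨Fin.snoc d c, fun j => ?_, ?_⟩
    · refine Fin.lastCases ?_ (fun i => ?_) j
      · simpa using hc
      · simpa using hd i
    · rw [Fin.sum_univ_castSucc]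
      simp only [Fin.snoc_castSucc, Fin.snoc_last]
      rw [← hsumd, sub_add_cancel]

/-- Let `r₀, …, rₙ` be complex numbers with
`0 < ‖r₀‖ ≤ ‖r₁‖ ≤ ⋯ ≤ ‖rₙ‖`, let `Rₙ = ∑ⱼ ‖rⱼ‖`, let `R_{n-1}` be the sum of all but
the last and let `Tₙ = ‖rₙ‖ - R_{n-1}` if `R_{n-1} ≤ ‖rₙ‖` and `Tₙ = 0` otherwise.
Then `{∑ⱼ cⱼ rⱼ : ‖cⱼ‖ = 1}` is exactly the closed annulus `{z : Tₙ ≤ ‖z‖ ≤ Rₙ}`. -/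
theorem statement_4 (n : ℕ) (r : Fin (n + 1) → ℂ)
    (hpos : 0 < ‖r 0‖)
    (hmono : ∀ i j : Fin (n + 1), i ≤ j → ‖r i‖ ≤ ‖r j‖) :
    {z : ℂ | ∃ c : Fin (n + 1) → ℂ, (∀ j, ‖c j‖ = 1) ∧ z = ∑ j, c j * r j} =
      {z : ℂ |
        (if (∑ j ∈ Finset.univ.erase (Fin.last n), ‖r j‖) ≤ ‖r (Fin.last n)‖ then
            ‖r (Fin.last n)‖ - ∑ j ∈ Finset.univ.erase (Fin.last n), ‖r j‖
          else 0) ≤ ‖z‖ ∧ ‖z‖ ≤ ∑ j, ‖r j‖} := by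
  have herase : ∑ j ∈ Finset.univ.erase (Fin.last n), ‖r j‖ = ∑ i : Fin n, ‖r i.castSucc‖ := by
    have h := Finset.sum_erase_add univ (fun j => ‖r j‖) (mem_univ (Fin.last n))
    rw [Fin.sum_univ_castSucc] at h
    exact add_right_cancel h
  rw [herase]
  ext z
  simp only [Set.mem_ofPred_eq]
  constructor
  · rintro ⟨c, hc, rfl⟩
    have hnorm : ∀ j, ‖c j * r j‖ = ‖r j‖ := fun j => by rw [norm_mul, hc, one_mul]
    refine ⟨?_, (norm_sum_le _ _).trans_eq (sum_congr rfl fun j _ => hnorm j)⟩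
    split_ifs
    · have hsub : ‖c (Fin.last n) * r (Fin.last n)‖ ≤ ‖∑ j, c j * r j‖ +
          ‖∑ i : Fin n, c i.castSucc * r i.castSucc‖ := by
        rw [Fin.sum_univ_castSucc, add_comm (∑ i : Fin n, _)]
        exact norm_le_add_norm_add _ _
      have hle : ‖∑ i : Fin n, c i.castSucc * r i.castSucc‖ ≤ ∑ i : Fin n, ‖r i.castSucc‖ :=
        (norm_sum_le _ _).trans_eq (sum_congr rfl fun i _ => hnorm i.castSucc)
      rw [hnorm] at hsub
      linarith
    · exact norm_nonneg _
  · rintro ⟨hlower, hupper⟩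
    refine exists_norm_one_eq_sum_mul n r (fun i j => hmono i j) z ?_ hupper
    split_ifs at hlower with h
    · linarith
    · linarith [norm_nonneg z]
end

section
/- Let b(p) be complex numbers indexed by primes p, let m be a non-negative integer, and assume: (i) for every ε > 0 one has b(p) ≪ p^ε; (ii) (1/((log x)^m π(x))) ∑_{p ≤ x} |b(p)|² → κ as x → ∞ for some real κ > 0 (sum over primes p ≤ x). Then for every c > 1, η > 0 and ε > 0 there is a constant A > 0 and x₀ such that for all x ≥ x₀, the number of primes p with x < p ≤ cx and |b(p)| > p^{−η} is at least A·x^{1−ε}. -/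
open Complex Filter Finset

/-- The finset of primes `p ≤ x`. -/
noncomputable def primesUpTo (x : ℝ) : Finset ℕ :=
  (Finset.range (⌊x⌋₊ + 1)).filter Nat.Prime

section PrimesInShortIntervals

open MeasureTheory FourierTransform

/-- After removing its principal part at `1`, the Dirichlet series of the von Mangoldt function
extends continuously to `re s ≥ 1`, hence to the whole plane. -/
lemma exists_continuous_eq_LSeries_vonMangoldt_sub :
    ∃ G : ℂ → ℂ, Continuous G ∧ ∀ s : ℂ, 1 < s.re →
      G s = LSeries (fun n ↦ (ArithmeticFunction.vonMangoldt n : ℂ)) s - 1 / (s - 1) := by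
  let H := ArithmeticFunction.vonMangoldt.LFunctionResidueClassAux (q := 1) 1
  let r : ℂ → ℂ := fun s ↦ (max 1 s.re : ℝ) + s.im * I
  have hr : Continuous r := by fun_prop
  refine ⟨H ∘ r, ?_, fun s hs ↦ ?_⟩
  · refine (ArithmeticFunction.vonMangoldt.continuousOn_LFunctionResidueClassAux
      (q := 1) 1).comp_continuous hr fun s ↦ ?_
    simp [r]
  have hrs : r s = s := by simp [r, max_eq_right hs.le, re_add_im]
  have : ∀ n : ℕ, ArithmeticFunction.vonMangoldt.residueClass (1 : ZMod 1) n =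
      ArithmeticFunction.vonMangoldt n := fun n ↦ by
    simp [ArithmeticFunction.vonMangoldt.residueClass, Subsingleton.elim (n : ZMod 1) 1]
  rw [Function.comp_apply, hrs]
  exact (ArithmeticFunction.vonMangoldt.eqOn_LFunctionResidueClassAux isUnit_one hs).trans
    (by simp [this])

lemma conj_fourier_eq_of_even {f : ℝ → ℝ} (hf : ∀ x, f (-x) = f x) (w : ℝ) :
    (starRingEnd ℂ) (𝓕 (fun x ↦ (f x : ℂ)) w) = 𝓕 (fun x ↦ (f x : ℂ)) w := by
  rw [Real.fourier_real_eq_integral_exp_smul, ← integral_conj,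
    ← integral_neg_eq_self (fun v : ℝ ↦ cexp (↑(-2 * Real.pi * v * w) * I) • (f v : ℂ))]
  congr 1 with v
  simp [← Complex.exp_conj, hf, Complex.conj_ofNat]

/-- A band-limited minorant, up to scaling, of the indicator function of an interval. -/
lemma exists_bandlimited_minorant :
    ∃ (φ : ℝ → ℂ) (M : ℝ → ℝ) (a B : ℝ), 0 < a ∧ 0 < B ∧ Continuous φ ∧ HasCompactSupport φ ∧
      Integrable M ∧ 0 < ∫ w, M w ∧ (∀ w, (M w : ℂ) = 𝓕 φ w) ∧
      (∀ w, M w ≤ B) ∧ ∀ w, a < |w| → M w ≤ 0 := by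
  let β : ContDiffBump (0 : ℝ) := ⟨1, 2, one_pos, one_lt_two⟩
  have hcs : HasCompactSupport (fun x ↦ (β x : ℂ)) := β.hasCompactSupport.comp_left (g := ofReal) rfl
  have hsm : ContDiff ℝ (⊤ : ℕ∞) (fun x ↦ (β x : ℂ)) :=
    ofRealCLM.contDiff.comp (g := ofRealCLM) (f := β) β.contDiff
  let f : SchwartzMap ℝ ℂ := hcs.toSchwartzMap hsm
  have hfc : (f : ℝ → ℂ) = fun x ↦ (β x : ℂ) := rfl
  let g : SchwartzMap ℝ ℂ := 𝓕 f
  have hgc : (g : ℝ → ℂ) = 𝓕 (fun x ↦ (β x : ℂ)) := by rw [← hfc]; exact SchwartzMap.fourier_coe f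
  have hreal : ∀ w, (((g w).re : ℝ) : ℂ) = g w := fun w ↦ by
    rw [← conj_eq_iff_re, hgc]
    exact conj_fourier_eq_of_even (fun x ↦ β.neg x) w
  let K : ℝ → ℝ := fun w ↦ (g w).re ^ 2
  have hK0 : ∀ w, 0 ≤ K w := fun w ↦ sq_nonneg _
  have hKcont : Continuous K := (continuous_re.comp g.continuous).pow 2
  have hKle : ∀ w, ‖K w‖ ≤ ‖g w‖ ^ 2 := fun w ↦ by
    rw [Real.norm_of_nonneg (hK0 w)]
    simp only [K]
    rw [← sq_abs (g w).re]
    gcongr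
    exact abs_re_le_norm _
  obtain ⟨C, hC⟩ : ∃ C, ∀ w, ‖g w‖ ≤ C := by
    obtain ⟨C, hC⟩ := g.decay 0 0
    exact ⟨C, fun w ↦ by simpa using hC.2 w⟩
  have hKint : Integrable K := by
    refine (g.integrable.norm.const_mul C).mono' hKcont.aestronglyMeasurable ?_
    filter_upwards with w
    nlinarith [hKle w, hC w, norm_nonneg (g w)]
  have hK2int : Integrable (fun w ↦ w ^ 2 * K w) := by
    refine ((g.integrable_pow_mul volume 2).const_mul C).mono'
      (by fun_prop) ?_
    filter_upwards with w
    have : ‖w ^ 2 * K w‖ = ‖w‖ ^ 2 * ‖K w‖ := by simp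
    rw [this]
    have : ‖K w‖ ≤ C * ‖g w‖ := by nlinarith [hKle w, hC w, norm_nonneg (g w)]
    nlinarith [sq_nonneg ‖w‖]
  have hKpos : 0 < ∫ w, K w := by
    refine integral_pos_of_integrable_nonneg_nonzero (x := 0) hKcont hKint hK0 ?_
    have h1 : g 0 = ((∫ x, β x : ℝ) : ℂ) := by
      rw [hgc, Real.fourier_real_eq_integral_exp_smul]
      simp [integral_complex_ofReal]
    simp only [K, h1, ofReal_re]
    exact pow_ne_zero _ β.integral_pos.ne'
  obtain ⟨a, ha, haK⟩ : ∃ a : ℝ, 0 < a ∧ ∫ w, w ^ 2 * K w < a ^ 2 * ∫ w, K w := by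
    have := ((tendsto_pow_atTop (α := ℝ) two_ne_zero).atTop_mul_const hKpos).eventually_gt_atTop
      (∫ w, w ^ 2 * K w)
    obtain ⟨a, ha⟩ := (this.and (eventually_gt_atTop 0)).exists
    exact ⟨a, ha.2, ha.1⟩
  let h : SchwartzMap ℝ ℂ := SchwartzMap.convolution (ContinuousLinearMap.mul ℂ ℂ) f f
  have hh : (h : ℝ → ℂ) = convolution f f (ContinuousLinearMap.mul ℂ ℂ) volume :=
    funext (SchwartzMap.convolution_apply _ f f)
  have hhcs : HasCompactSupport h := by
    rw [hh]
    exact HasCompactSupport.convolution _ hcs hcs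
  have hFh : ∀ w, 𝓕 (h : ℝ → ℂ) w = (K w : ℂ) := fun w ↦ by
    rw [hh, Real.fourier_mul_convolution_eq f.integrable f.integrable, ← SchwartzMap.fourier_coe]
    change g w * g w = _
    rw [← hreal w]
    simp [K, sq]
  let h' : SchwartzMap ℝ ℂ := SchwartzMap.derivCLM ℝ ℂ h
  have hh' : (h' : ℝ → ℂ) = deriv h := rfl
  let h'' : SchwartzMap ℝ ℂ := SchwartzMap.derivCLM ℝ ℂ h'
  have hh'' : (h'' : ℝ → ℂ) = deriv h' := rfl
  have hF' : 𝓕 (h' : ℝ → ℂ) = fun (x : ℝ) ↦ (2 * Real.pi * I * x) • (𝓕 (h : ℝ → ℂ) x) := by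
    rw [hh']
    exact Real.fourier_deriv h.integrable h.differentiable h'.integrable
  have hF'' : 𝓕 (h'' : ℝ → ℂ) = fun (x : ℝ) ↦ (2 * Real.pi * I * x) • (𝓕 (h' : ℝ → ℂ) x) := by
    rw [hh'']
    exact Real.fourier_deriv h'.integrable h'.differentiable h''.integrable
  let φ : SchwartzMap ℝ ℂ := ((a : ℂ) ^ 2) • h + ((4 * Real.pi ^ 2 : ℂ)⁻¹) • h''
  let M : ℝ → ℝ := fun w ↦ (a ^ 2 - w ^ 2) * K w
  have hM : ∀ w, M w = a ^ 2 * K w - w ^ 2 * K w := fun w ↦ by simp only [M]; ring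
  refine ⟨φ, M, a, a ^ 2 * C ^ 2 + 1, ha, by positivity, φ.continuous, ?_, ?_, ?_, ?_, ?_, ?_⟩
  · have h2 : HasCompactSupport h'' := by
      rw [hh'', hh']
      exact hhcs.deriv.deriv
    exact (hhcs.comp_left (g := fun z ↦ (a : ℂ) ^ 2 • z) (by simp)).add
      (h2.comp_left (g := fun z ↦ ((4 * Real.pi ^ 2 : ℂ)⁻¹) • z) (by simp))
  · simp_rw [funext hM]
    exact (hKint.const_mul _).sub hK2int
  · simp_rw [hM]
    rw [integral_sub (hKint.const_mul _) hK2int, integral_const_mul]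
    linarith
  · intro w
    have : 𝓕 (φ : ℝ → ℂ) w =
        (a : ℂ) ^ 2 * 𝓕 (h : ℝ → ℂ) w + ((4 * Real.pi ^ 2 : ℂ)⁻¹) * 𝓕 (h'' : ℝ → ℂ) w := by
      simp only [← SchwartzMap.fourier_coe, φ, FourierTransform.fourier_add,
        FourierTransform.fourier_smul, add_apply, smul_apply, smul_eq_mul]
    rw [this, hF'']
    simp only [hF', hFh, smul_eq_mul, M]
    have hpi : (Real.pi : ℂ) ≠ 0 := ofReal_ne_zero.2 Real.pi_ne_zero
    field_simp
    push_cast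
    linear_combination (-4 * (K w : ℂ) * w ^ 2) * I_sq
  · intro w
    have : K w ≤ C ^ 2 := (le_abs_self _).trans ((hKle w).trans (by gcongr; exact hC w))
    rw [hM]
    nlinarith [mul_nonneg (sq_nonneg w) (hK0 w), sq_nonneg a]
  · intro w hw
    have : a ^ 2 ≤ w ^ 2 := by
      rw [← sq_abs w]
      gcongr
    exact mul_nonpos_of_nonpos_of_nonneg (by linarith) (hK0 w)

lemma integrable_exp_mul_I_smul {φ : ℝ → ℂ} (hφ : Integrable φ) (w : ℝ) :
    Integrable (fun t : ℝ ↦ cexp (↑(-2 * Real.pi * t * w) * I) • φ t) := by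
  have hc : Continuous fun t : ℝ ↦ cexp (↑(-2 * Real.pi * t * w) * I) := by fun_prop
  refine hφ.norm.mono' (hc.aestronglyMeasurable.smul hφ.1) ?_
  filter_upwards with t
  rw [norm_smul, norm_exp_ofReal_mul_I, one_mul]

/-- Pairing a Fourier transform with the von Mangoldt coefficients on `re s = σ > 1`. -/
lemma hasSum_vonMangoldt_mul_fourier {φ : ℝ → ℂ} (hφ : Integrable φ) {σ : ℝ} (hσ : 1 < σ)
    (l y : ℝ) :
    HasSum (fun n : ℕ ↦ ((ArithmeticFunction.vonMangoldt n * (n : ℝ) ^ (-σ) : ℝ) : ℂ) *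
        𝓕 φ (l * (y - Real.log n)))
      (∫ t : ℝ, cexp (↑(-2 * Real.pi * t * (l * y)) * I) • (φ t *
        LSeries (fun n ↦ (ArithmeticFunction.vonMangoldt n : ℂ))
          (σ - 2 * Real.pi * l * t * I))) := by
  let F : ℕ → ℝ → ℂ := fun n t ↦
    ((ArithmeticFunction.vonMangoldt n * (n : ℝ) ^ (-σ) : ℝ) : ℂ) *
      (cexp (↑(-2 * Real.pi * t * (l * (y - Real.log n))) * I) • φ t)
  have hFint : ∀ n, Integrable (F n) := fun n ↦ (integrable_exp_mul_I_smul hφ _).const_mul _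
  have hcoef : ∀ n : ℕ, 0 ≤ ArithmeticFunction.vonMangoldt n * (n : ℝ) ^ (-σ) := fun n ↦
    mul_nonneg ArithmeticFunction.vonMangoldt_nonneg (by positivity)
  have hFnorm : ∀ n t, ‖F n t‖ = ArithmeticFunction.vonMangoldt n * (n : ℝ) ^ (-σ) * ‖φ t‖ := by
    intro n t
    simp only [F]
    rw [norm_mul, norm_smul, norm_exp_ofReal_mul_I, one_mul, norm_real,
      Real.norm_of_nonneg (hcoef n)]
  have hsumm : Summable fun n : ℕ ↦ ArithmeticFunction.vonMangoldt n * (n : ℝ) ^ (-σ) := by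
    have := (ArithmeticFunction.LSeriesSummable_vonMangoldt (s := σ) (by simpa using hσ)).norm
    refine this.congr fun n ↦ ?_
    rcases eq_or_ne n 0 with rfl | hn
    · simp
    · rw [LSeries.norm_term_eq, if_neg hn, Real.rpow_neg (by positivity), ofReal_re, norm_real,
        Real.norm_of_nonneg ArithmeticFunction.vonMangoldt_nonneg, div_eq_mul_inv]
  have key := hasSum_integral_of_summable_integral_norm hFint (by
    simp_rw [hFnorm, integral_const_mul]
    exact hsumm.mul_right _)
  have hterm : ∀ n : ℕ, ∫ t, F n t =
      ((ArithmeticFunction.vonMangoldt n * (n : ℝ) ^ (-σ) : ℝ) : ℂ) *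
        𝓕 φ (l * (y - Real.log n)) := fun n ↦ by
    rw [Real.fourier_real_eq_integral_exp_smul, ← integral_const_mul]
  have hint : ∀ t : ℝ, ∑' n, F n t = cexp (↑(-2 * Real.pi * t * (l * y)) * I) • (φ t *
        LSeries (fun n ↦ (ArithmeticFunction.vonMangoldt n : ℂ))
          (σ - 2 * Real.pi * l * t * I)) := fun t ↦ by
    rw [LSeries, ← tsum_mul_left, smul_eq_mul, ← tsum_mul_left]
    refine tsum_congr fun n ↦ ?_
    simp only [F]
    rcases eq_or_ne n 0 with rfl | hn
    · simp
    have hn' : (n : ℂ) ≠ 0 := Nat.cast_ne_zero.2 hn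
    rw [LSeries.term_of_ne_zero hn, cpow_def_of_ne_zero hn', div_eq_mul_inv, ← Complex.exp_neg,
      Real.rpow_def_of_pos (by positivity), ← natCast_log, smul_eq_mul]
    have : cexp (↑(-2 * Real.pi * t * (l * y)) * I) *
        cexp (-(↑(Real.log n) * (σ - 2 * Real.pi * l * t * I))) =
        cexp ↑(Real.log n * -σ) * cexp (↑(-2 * Real.pi * t * (l * (y - Real.log n))) * I) := by
      rw [← Complex.exp_add, ← Complex.exp_add]
      congr 1
      push_cast
      ring
    push_cast at this ⊢
    linear_combination -(φ t * ArithmeticFunction.vonMangoldt n) * this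
  simpa only [hterm, hint] using key

lemma integral_exp_mul_fourier {φ : ℝ → ℂ} (hφ : Integrable φ)
    {τ : ℝ} (hτ : 0 < τ) (l y : ℝ) :
    ∫ u in Set.Ioi (0 : ℝ), (Real.exp (-τ * u) : ℂ) * 𝓕 φ (l * (y - u)) =
      ∫ t : ℝ, cexp (↑(-2 * Real.pi * t * (l * y)) * I) •
        (φ t * (1 / (τ - 2 * Real.pi * l * t * I))) := by
  have hexp : Integrable (fun u ↦ Real.exp (-τ * u)) (volume.restrict (Set.Ioi 0)) :=
    integrableOn_exp_mul_Ioi (by linarith) 0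
  have hprod := hexp.mul_prod hφ.norm
  have hint : Integrable (Function.uncurry fun u t : ℝ ↦ (Real.exp (-τ * u) : ℂ) *
      (cexp (↑(-2 * Real.pi * t * (l * (y - u))) * I) • φ t))
      ((volume.restrict (Set.Ioi 0)).prod volume) := by
    refine hprod.mono' ?_ ?_
    · refine AEStronglyMeasurable.mul (Continuous.aestronglyMeasurable (by fun_prop)) ?_
      have hc : Continuous fun p : ℝ × ℝ ↦
        cexp (↑(-2 * Real.pi * p.2 * (l * (y - p.1))) * I) := by fun_prop
      exact hc.aestronglyMeasurable.smul hφ.1.comp_snd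
    · filter_upwards with p
      simp only [Function.uncurry]
      rw [norm_mul, norm_smul, norm_exp_ofReal_mul_I, one_mul, norm_real, Real.norm_eq_abs,
        Real.abs_exp]
  simp_rw [Real.fourier_real_eq_integral_exp_smul, ← integral_const_mul]
  rw [integral_integral_swap hint]
  congr 1 with t
  have hz : (-(τ - 2 * Real.pi * l * t * I) : ℂ).re < 0 := by simpa using hτ
  have h1 := integral_exp_mul_complex_Ioi hz 0
  have h2 : ∀ u : ℝ, (Real.exp (-τ * u) : ℂ) *
      (cexp (↑(-2 * Real.pi * t * (l * (y - u))) * I) • φ t) =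
      (cexp (↑(-2 * Real.pi * t * (l * y)) * I) * φ t) *
        cexp (-(τ - 2 * Real.pi * l * t * I) * u) := fun u ↦ by
    have : cexp ↑(-τ * u) * cexp (↑(-2 * Real.pi * t * (l * (y - u))) * I) =
        cexp (↑(-2 * Real.pi * t * (l * y)) * I) * cexp (-(τ - 2 * Real.pi * l * t * I) * u) := by
      rw [← Complex.exp_add, ← Complex.exp_add]
      congr 1
      push_cast
      ring
    rw [smul_eq_mul, ofReal_exp]
    linear_combination φ t * this
  simp_rw [h2, integral_const_mul, h1]
  simp only [ofReal_zero, mul_zero, Complex.exp_zero, smul_eq_mul, mul_assoc]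
  rw [neg_div_neg_eq]

/-- The Wiener–Ikehara identity on the line `re s = σ > 1`. -/
lemma hasSum_vonMangoldt_mul_bandlimited {G : ℂ → ℂ} (hG : Continuous G)
    (hGL : ∀ s : ℂ, 1 < s.re →
      G s = LSeries (fun n ↦ (ArithmeticFunction.vonMangoldt n : ℂ)) s - 1 / (s - 1))
    {φ : ℝ → ℂ} (hφ : Continuous φ) (hφs : HasCompactSupport φ)
    {M : ℝ → ℝ} (hM : ∀ w, (M w : ℂ) = 𝓕 φ w) {σ : ℝ} (hσ : 1 < σ) (l y : ℝ) :
    HasSum (fun n : ℕ ↦ ArithmeticFunction.vonMangoldt n * (n : ℝ) ^ (-σ) *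
        M (l * (y - Real.log n)))
      ((∫ t : ℝ, cexp (↑(-2 * Real.pi * t * (l * y)) * I) •
          (φ t * G (σ - 2 * Real.pi * l * t * I))).re +
        ∫ u in Set.Ioi (0 : ℝ), Real.exp (-(σ - 1) * u) * M (l * (y - u))) := by
  have hφi : Integrable φ := hφ.integrable_of_hasCompactSupport hφs
  have hne : ∀ t : ℝ, ((σ - 1 : ℝ) : ℂ) - 2 * Real.pi * l * t * I ≠ 0 := fun t h ↦ by
    have := congrArg re h
    simp at this
    linarith
  have hsplit : ∀ t : ℝ, cexp (↑(-2 * Real.pi * t * (l * y)) * I) • (φ t *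
        LSeries (fun n ↦ (ArithmeticFunction.vonMangoldt n : ℂ)) (σ - 2 * Real.pi * l * t * I)) =
      cexp (↑(-2 * Real.pi * t * (l * y)) * I) • (φ t * G (σ - 2 * Real.pi * l * t * I)) +
      cexp (↑(-2 * Real.pi * t * (l * y)) * I) •
        (φ t * (1 / ((σ - 1 : ℝ) - 2 * Real.pi * l * t * I))) := fun t ↦ by
    rw [hGL _ (by simpa using hσ), show (σ : ℂ) - 2 * Real.pi * l * t * I - 1 =
      (σ - 1 : ℝ) - 2 * Real.pi * l * t * I by push_cast; ring]
    simp only [smul_eq_mul]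
    ring
  have hcs : ∀ g : ℝ → ℂ, HasCompactSupport fun t : ℝ ↦
      cexp (↑(-2 * Real.pi * t * (l * y)) * I) • (φ t * g t) := fun g ↦
    hφs.mono fun t ht h0 ↦ ht (by simp [h0])
  have hi1 : Integrable fun t : ℝ ↦ cexp (↑(-2 * Real.pi * t * (l * y)) * I) •
      (φ t * G (σ - 2 * Real.pi * l * t * I)) :=
    Continuous.integrable_of_hasCompactSupport (by fun_prop) (hcs _)
  have hi2 : Integrable fun t : ℝ ↦ cexp (↑(-2 * Real.pi * t * (l * y)) * I) •
      (φ t * (1 / ((σ - 1 : ℝ) - 2 * Real.pi * l * t * I))) := by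
    refine Continuous.integrable_of_hasCompactSupport ?_ (hcs _)
    have : Continuous fun t : ℝ ↦ (1 : ℂ) / ((σ - 1 : ℝ) - 2 * Real.pi * l * t * I) :=
      continuous_const.div (by fun_prop) hne
    fun_prop
  have h := hasSum_vonMangoldt_mul_fourier hφi hσ l y
  rw [funext hsplit, integral_add hi1 hi2,
    ← integral_exp_mul_fourier hφi (sub_pos.2 hσ) l y] at h
  simp_rw [← hM, ← ofReal_mul] at h
  rw [integral_complex_ofReal] at h
  simpa only [ofReal_re, add_re] using hasSum_re h

lemma tendsto_integral_exp_mul_nhdsGT {f : ℝ → ℝ} (hf : Integrable f) :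
    Tendsto (fun σ : ℝ ↦ ∫ u in Set.Ioi (0 : ℝ), Real.exp (-(σ - 1) * u) * f u)
      (nhdsWithin 1 (Set.Ioi 1)) (nhds (∫ u in Set.Ioi (0 : ℝ), f u)) := by
  refine tendsto_integral_filter_of_dominated_convergence (fun u ↦ ‖f u‖) ?_ ?_
    hf.norm.integrableOn ?_
  · refine Eventually.of_forall fun σ ↦ ?_
    have : Continuous fun u : ℝ ↦ Real.exp (-(σ - 1) * u) := by fun_prop
    exact (this.aestronglyMeasurable.mul hf.1).restrict
  · filter_upwards [self_mem_nhdsWithin] with σ hσ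
    filter_upwards [ae_restrict_mem measurableSet_Ioi] with u hu
    rw [norm_mul, Real.norm_eq_abs, Real.abs_exp]
    refine mul_le_of_le_one_left (norm_nonneg _) (Real.exp_le_one_iff.2 ?_)
    have : 0 < (σ - 1) * u := mul_pos (sub_pos.2 hσ) hu
    linarith
  · refine Eventually.of_forall fun u ↦ ?_
    have : Continuous fun σ : ℝ ↦ Real.exp (-(σ - 1) * u) * f u := by fun_prop
    simpa using (this.tendsto 1).mono_left nhdsWithin_le_nhds

lemma tendsto_integral_Ioi_comp_sub {f : ℝ → ℝ} (hf : Integrable f) :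
    Tendsto (fun y : ℝ ↦ ∫ u in Set.Ioi (0 : ℝ), f (y - u)) atTop (nhds (∫ v, f v)) := by
  have h : ∀ y : ℝ, ∫ u in Set.Ioi (0 : ℝ), f (y - u) = ∫ v in Set.Iio y, f v := fun y ↦ by
    rw [← integral_indicator measurableSet_Ioi, ← integral_indicator measurableSet_Iio,
      ← integral_sub_left_eq_self _ volume y]
    congr 1 with u
    simp [Set.indicator_apply]
  simp_rw [h]
  exact (aecover_Iio tendsto_id).integral_tendsto_of_countably_generated hf

/-- Every multiplicative window `(x, cx]` carries a positive proportion of the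
logarithmic mass of the von Mangoldt function. -/
theorem exists_pos_le_sum_vonMangoldt_div {c : ℝ} (hc : 1 < c) :
    ∃ δ : ℝ, 0 < δ ∧ ∀ᶠ x : ℝ in atTop,
      δ ≤ ∑ n ∈ Ioc ⌊x⌋₊ ⌊c * x⌋₊, ArithmeticFunction.vonMangoldt n / n := by
  obtain ⟨G, hG, hGL⟩ := exists_continuous_eq_LSeries_vonMangoldt_sub
  obtain ⟨φ, M, a, B, ha, hB, hφ, hφs, hMi, hMpos, hM, hMB, hM0⟩ :=
    exists_bandlimited_minorant
  have hlogc : 0 < Real.log c := Real.log_pos hc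
  obtain ⟨l, hl, hla⟩ : ∃ l : ℝ, 0 < l ∧ a < l * (Real.log c / 2) :=
    ⟨4 * a / Real.log c, by positivity, by field_simp; linarith⟩
  let R : ℝ → ℝ → ℝ := fun σ y ↦ (∫ t : ℝ, cexp (↑(-2 * Real.pi * t * (l * y)) * I) •
    (φ t * G (σ - 2 * Real.pi * l * t * I))).re
  have hfl : Integrable fun v ↦ M (l * v) := hMi.comp_mul_left' hl.ne'
  have hR : ∀ y, Continuous fun σ ↦ R σ y := fun y ↦ by
    have : ∀ σ : ℝ, ∫ t : ℝ, cexp (↑(-2 * Real.pi * t * (l * y)) * I) •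
        (φ t * G (σ - 2 * Real.pi * l * t * I)) =
        ∫ t in tsupport φ, cexp (↑(-2 * Real.pi * t * (l * y)) * I) •
        (φ t * G (σ - 2 * Real.pi * l * t * I)) := fun σ ↦
      (setIntegral_eq_integral_of_forall_compl_eq_zero fun t ht ↦ by
        simp [image_eq_zero_of_notMem_tsupport ht]).symm
    simp only [R, this]
    refine continuous_re.comp (continuous_parametric_integral_of_continuous ?_ hφs)
    simp only [Function.uncurry_def]
    fun_prop
  have hlim : Tendsto (fun y ↦ R 1 y + ∫ u in Set.Ioi (0 : ℝ), M (l * (y - u))) atTop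
      (nhds (0 + ∫ v, M (l * v))) := by
    refine Tendsto.add ?_ (tendsto_integral_Ioi_comp_sub hfl)
    have h0 := (Real.zero_at_infty_fourier fun t : ℝ ↦
      φ t * G ((1 : ℝ) - 2 * Real.pi * l * t * I)).mono_left atTop_le_cocompact
    have h1 := (continuous_re.tendsto 0).comp (h0.comp (tendsto_id.const_mul_atTop hl))
    simpa [Function.comp_def, R, Real.fourier_real_eq_integral_exp_smul] using h1
  have hP : 0 < ∫ v, M (l * v) := by
    rw [Measure.integral_comp_mul_left]
    exact smul_pos (abs_pos.2 (inv_ne_zero hl.ne')) hMpos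
  have hev := (hlim.comp (tendsto_atTop_add_const_right _ (Real.log c / 2)
    Real.tendsto_log_atTop)).eventually_const_lt
      (show (∫ v, M (l * v)) / 2 < 0 + ∫ v, M (l * v) by linarith)
  refine ⟨(∫ v, M (l * v)) / 2 / B, by positivity, ?_⟩
  filter_upwards [hev, eventually_gt_atTop 0] with x hx hx0
  rw [div_le_iff₀ hB]
  refine hx.le.trans ?_
  simp only [Function.comp_apply]
  set y := Real.log x + Real.log c / 2 with hy
  refine le_of_tendsto ((((hR y).tendsto 1).mono_left nhdsWithin_le_nhds).add
    (tendsto_integral_exp_mul_nhdsGT (hfl.comp_sub_left y))) ?_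
  filter_upwards [self_mem_nhdsWithin] with σ (hσ : 1 < σ)
  have hsum := hasSum_vonMangoldt_mul_bandlimited hG hGL hφ hφs hM hσ l y
  have hE : (∑ n ∈ Ioc ⌊x⌋₊ ⌊c * x⌋₊, ArithmeticFunction.vonMangoldt n / n) * B =
      ∑ n ∈ Ioc ⌊x⌋₊ ⌊c * x⌋₊, if n ∈ Ioc ⌊x⌋₊ ⌊c * x⌋₊ then
        ArithmeticFunction.vonMangoldt n / n * B else 0 := by
    rw [sum_mul]
    exact sum_congr rfl fun n hn ↦ (if_pos hn).symm
  rw [hE]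
  refine hasSum_le (fun n ↦ ?_) hsum (hasSum_sum_of_ne_finset_zero fun n hn ↦ if_neg hn)
  have hΛ : 0 ≤ ArithmeticFunction.vonMangoldt n := ArithmeticFunction.vonMangoldt_nonneg
  rcases Nat.eq_zero_or_pos n with rfl | hn
  · simp
  have hn1 : (1 : ℝ) ≤ n := by exact_mod_cast hn
  split_ifs with hmem
  · have h1 : (n : ℝ) ^ (-σ) ≤ (n : ℝ)⁻¹ := by
      rw [← Real.rpow_neg_one]
      exact Real.rpow_le_rpow_of_exponent_le hn1 (by linarith)
    rw [div_eq_mul_inv]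
    calc _ ≤ ArithmeticFunction.vonMangoldt n * (n : ℝ) ^ (-σ) * B := by gcongr; exact hMB _
      _ ≤ _ := by gcongr
  · refine mul_nonpos_of_nonneg_of_nonpos (by positivity) (hM0 _ ?_)
    rw [abs_mul, abs_of_pos hl]
    refine hla.trans_le (mul_le_mul_of_nonneg_left ?_ hl.le)
    rw [Finset.mem_Ioc, not_and_or, not_lt, not_le] at hmem
    rcases hmem with h | h
    · have : Real.log n ≤ Real.log x :=
        Real.log_le_log (by positivity) ((Nat.le_floor_iff hx0.le).1 h)
      exact le_trans (by rw [hy]; linarith) (le_abs_self _)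
    · have : Real.log (c * x) ≤ Real.log n :=
        Real.log_le_log (by positivity) (Nat.lt_of_floor_lt h).le
      rw [Real.log_mul (by positivity) hx0.ne'] at this
      exact le_trans (by rw [hy]; linarith) (neg_le_abs _)

lemma exists_pos_mul_le_psi_sub_psi {c : ℝ} (hc : 1 < c) :
    ∃ δ : ℝ, 0 < δ ∧ ∀ᶠ x : ℝ in atTop, δ * x ≤ Chebyshev.psi (c * x) - Chebyshev.psi x := by
  obtain ⟨δ, hδ, h⟩ := exists_pos_le_sum_vonMangoldt_div hc
  refine ⟨δ, hδ, ?_⟩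
  filter_upwards [h, eventually_gt_atTop 0] with x hx hx0
  have hfl : ⌊x⌋₊ ≤ ⌊c * x⌋₊ := Nat.floor_mono (by nlinarith)
  have hsplit : Chebyshev.psi (c * x) - Chebyshev.psi x =
      ∑ n ∈ Ioc ⌊x⌋₊ ⌊c * x⌋₊, ArithmeticFunction.vonMangoldt n := by
    rw [Chebyshev.psi, Chebyshev.psi, ← sum_Ioc_consecutive _ (Nat.zero_le _) hfl,
      add_sub_cancel_left]
  rw [hsplit]
  refine (mul_le_mul_of_nonneg_right hx hx0.le).trans ?_
  rw [sum_mul]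
  refine sum_le_sum fun n hn ↦ ?_
  have hxn : x < n := Nat.lt_of_floor_lt (Finset.mem_Ioc.1 hn).1
  rw [div_mul_eq_mul_div, div_le_iff₀ (hx0.trans hxn)]
  exact mul_le_mul_of_nonneg_left hxn.le ArithmeticFunction.vonMangoldt_nonneg

lemma exists_pos_mul_le_theta_sub_theta {c : ℝ} (hc : 1 < c) :
    ∃ δ : ℝ, 0 < δ ∧ ∀ᶠ x : ℝ in atTop,
      δ * x ≤ Chebyshev.theta (c * x) - Chebyshev.theta x := by
  obtain ⟨δ, hδ, h⟩ := exists_pos_mul_le_psi_sub_psi hc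
  obtain ⟨C, hC⟩ := Chebyshev.psi_sub_theta_le_mul_sqrt
  refine ⟨δ / 2, by positivity, ?_⟩
  have hsq : ∀ᶠ x : ℝ in atTop, C * √c ≤ δ / 2 * √x :=
    (Real.tendsto_sqrt_atTop.const_mul_atTop (by positivity)).eventually_ge_atTop _
  filter_upwards [h, hsq, eventually_gt_atTop 0] with x hx hsx hx0
  have h1 := hC (c * x)
  rw [Real.sqrt_mul (by positivity), ← mul_assoc] at h1
  have h2 : C * √c * √x ≤ δ / 2 * x := by
    calc _ ≤ δ / 2 * √x * √x := by gcongr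
      _ = _ := by rw [mul_assoc, Real.mul_self_sqrt hx0.le]
  linarith [Chebyshev.theta_le_psi x]

lemma primesUpTo_mono {x y : ℝ} (h : x ≤ y) : primesUpTo x ⊆ primesUpTo y :=
  filter_subset_filter _ (range_mono (Nat.succ_le_succ (Nat.floor_mono h)))

lemma card_primesUpTo (x : ℝ) : (primesUpTo x).card = Nat.primeCounting ⌊x⌋₊ := by
  rw [Nat.primeCounting, Nat.primeCounting', Nat.count_eq_card_filter_range, primesUpTo]

lemma theta_eq_sum_primesUpTo (x : ℝ) :
    Chebyshev.theta x = ∑ p ∈ primesUpTo x, Real.log p := by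
  rw [Chebyshev.theta_eq_sum_Icc, primesUpTo, range_eq_Ico]
  rfl

lemma mem_primesUpTo_sdiff {x y : ℝ} (hx : 0 ≤ x) (hy : 0 ≤ y) {p : ℕ} :
    p ∈ primesUpTo y \ primesUpTo x ↔ p.Prime ∧ x < p ∧ (p : ℝ) ≤ y := by
  simp only [primesUpTo, Finset.mem_sdiff, Finset.mem_filter, Finset.mem_range,
    Order.lt_add_one_iff, Nat.le_floor_iff hx, Nat.le_floor_iff hy]
  grind

/-- The number of primes in `(x, cx]` is `≫ x / log x` for every `c > 1`. -/
theorem exists_pos_le_card_primesUpTo_sub {c : ℝ} (hc : 1 < c) :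
    ∃ δ : ℝ, 0 < δ ∧ ∀ᶠ x : ℝ in atTop,
      δ * (x / Real.log x) ≤ (primesUpTo (c * x)).card - (primesUpTo x).card := by
  obtain ⟨δ, hδ, h⟩ := exists_pos_mul_le_theta_sub_theta hc
  refine ⟨δ / 2, by positivity, ?_⟩
  filter_upwards [h, eventually_gt_atTop 1, eventually_ge_atTop c] with x hx hx1 hxc
  have hx0 : 0 < x := by linarith
  have hcx : x ≤ c * x := by nlinarith
  have hL : 0 < Real.log x := Real.log_pos hx1
  have hlog : Real.log (c * x) ≤ 2 * Real.log x := by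
    rw [Real.log_mul (by positivity) hx0.ne']
    linarith [Real.log_le_log (by positivity) hxc]
  have hsub := primesUpTo_mono hcx
  rw [theta_eq_sum_primesUpTo, theta_eq_sum_primesUpTo, ← sum_sdiff hsub, add_sub_cancel_right]
    at hx
  have hle : ∑ p ∈ primesUpTo (c * x) \ primesUpTo x, Real.log p ≤
      (primesUpTo (c * x) \ primesUpTo x).card * (2 * Real.log x) := by
    rw [← nsmul_eq_mul]
    refine sum_le_card_nsmul _ _ _ fun p hp ↦ ?_
    obtain ⟨hp, -, hpx⟩ := (mem_primesUpTo_sdiff hx0.le (by positivity)).1 hp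
    exact (Real.log_le_log (by exact_mod_cast hp.pos) hpx).trans hlog
  rw [cast_card_sdiff hsub] at hle
  rw [← mul_div_assoc, div_le_iff₀ hL]
  linarith

lemma eventually_card_primesUpTo_le :
    ∀ᶠ x : ℝ in atTop, ((primesUpTo x).card : ℝ) ≤ (Real.log 4 + 1) * (x / Real.log x) := by
  filter_upwards [Chebyshev.eventually_primeCounting_le one_pos] with x hx
  rw [card_primesUpTo, ← mul_div_assoc]
  exact hx

lemma exists_pos_le_sum_normSq_sdiff {b : ℕ → ℂ} {m : ℕ} {κ : ℝ} (hκ : 0 < κ)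
    (hSel : Tendsto (fun x : ℝ =>
        (∑ p ∈ primesUpTo x, ‖b p‖ ^ 2) / ((Real.log x) ^ m * ((primesUpTo x).card : ℝ)))
      atTop (nhds κ)) {c : ℝ} (hc : 1 < c) :
    ∃ δ : ℝ, 0 < δ ∧ ∀ᶠ x : ℝ in atTop,
      δ * (x / Real.log x) ≤ ∑ p ∈ primesUpTo (c * x) \ primesUpTo x, ‖b p‖ ^ 2 := by
  obtain ⟨δ, hδ, h⟩ := exists_pos_le_card_primesUpTo_sub hc
  obtain ⟨D, hD, hDcard⟩ : ∃ D : ℝ, 0 < D ∧ ∀ᶠ x : ℝ in atTop,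
      ((primesUpTo x).card : ℝ) ≤ D * (x / Real.log x) :=
    ⟨_, by positivity, eventually_card_primesUpTo_le⟩
  let r : ℝ := 1 + 2 * (D / δ)
  have hr : 1 ≤ r := le_add_of_nonneg_right (by positivity)
  let τ : ℝ := κ / (2 * r)
  have hτ : 0 < τ := by positivity
  have hτr : τ * r = κ / 2 := by
    simp only [τ]
    field_simp
  have hτκ : τ < κ := by nlinarith
  have hcx : Tendsto (fun x : ℝ ↦ c * x) atTop atTop :=
    tendsto_id.const_mul_atTop (by linarith)
  refine ⟨κ / 2 * δ, by positivity, ?_⟩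
  filter_upwards [h, hDcard, hSel.eventually_lt_const (show κ < κ + τ by linarith),
    hcx.eventually (hSel.eventually_const_lt (show κ - τ < κ by linarith)),
    Real.tendsto_log_atTop.eventually_ge_atTop 1, eventually_ge_atTop 2]
    with x hx hxD hup hlow hL hx2
  have hxcx : x ≤ c * x := by nlinarith
  have hpos : ∀ z : ℝ, 2 ≤ z → 0 < ((primesUpTo z).card : ℝ) := fun z hz ↦ by
    rw [Nat.cast_pos, card_pos]
    refine ⟨2, ?_⟩
    simp only [primesUpTo, Finset.mem_filter, Finset.mem_range, Order.lt_add_one_iff]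
    exact ⟨Nat.le_floor (by exact_mod_cast hz), Nat.prime_two⟩
  have hLc : Real.log x ≤ Real.log (c * x) := Real.log_le_log (by linarith) hxcx
  have hP := hpos x hx2
  have hQ := hpos (c * x) (hx2.trans hxcx)
  rw [div_lt_iff₀ (mul_pos (pow_pos (by linarith) m) hP)] at hup
  rw [lt_div_iff₀ (mul_pos (pow_pos (by linarith) m) hQ)] at hlow
  have hsum := sum_sdiff (primesUpTo_mono hxcx) (f := fun p ↦ ‖b p‖ ^ 2)
  set P : ℝ := ((primesUpTo x).card : ℝ)
  set Q : ℝ := ((primesUpTo (c * x)).card : ℝ)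
  have hpow : Real.log x ^ m ≤ Real.log (c * x) ^ m := by gcongr
  have hpow1 : 1 ≤ Real.log x ^ m := one_le_pow₀ hL
  have hlow' : (κ - τ) * (Real.log x ^ m * Q) ≤ (κ - τ) * (Real.log (c * x) ^ m * Q) := by
    have : 0 < κ - τ := by linarith
    gcongr
  have hX : x / Real.log x ≤ (Q - P) / δ := by
    rw [le_div_iff₀ hδ]
    linarith
  have hQP : 0 ≤ Q - P := le_trans (by positivity) hx
  have hsumPQ : Q + P ≤ r * (Q - P) := by
    have : P ≤ D * ((Q - P) / δ) := hxD.trans (by gcongr)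
    calc Q + P = (Q - P) + 2 * P := by ring
      _ ≤ (Q - P) + 2 * (D * ((Q - P) / δ)) := by linarith
      _ = r * (Q - P) := by simp only [r]; ring
  have hmain : κ / 2 * (Q - P) ≤ κ * (Q - P) - τ * (Q + P) := by
    have := mul_le_mul_of_nonneg_left hsumPQ hτ.le
    rw [← mul_assoc, hτr] at this
    linarith
  have hnn : 0 ≤ κ / 2 * (Q - P) := by positivity
  calc κ / 2 * δ * (x / Real.log x) ≤ κ / 2 * (Q - P) := by
        rw [mul_assoc]
        gcongr
    _ ≤ Real.log x ^ m * (κ * (Q - P) - τ * (Q + P)) :=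
        hmain.trans (le_mul_of_one_le_left (hnn.trans hmain) hpow1)
    _ ≤ _ := by linarith

lemma sum_normSq_sdiff_le {b : ℕ → ℂ} {c η ε C x : ℝ} (hc : 1 < c) (hη : 0 < η)
    (hε : 0 < ε) (hb : ∀ p : ℕ, p.Prime → ‖b p‖ ≤ C * (p : ℝ) ^ ε) (hx : 1 ≤ x) :
    ∑ p ∈ primesUpTo (c * x) \ primesUpTo x, ‖b p‖ ^ 2 ≤
      c * x * (x ^ (-η)) ^ 2 +
        ((primesUpTo (c * x) \ primesUpTo x).filter fun p : ℕ ↦ (p : ℝ) ^ (-η) < ‖b p‖).card *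
          (C * (c * x) ^ ε) ^ 2 := by
  have hx0 : 0 < x := by linarith
  set T := primesUpTo (c * x) \ primesUpTo x with hT
  have hmem : ∀ p ∈ T, p.Prime ∧ x < p ∧ (p : ℝ) ≤ c * x := fun p hp ↦
    (mem_primesUpTo_sdiff hx0.le (by positivity)).1 hp
  have hcard : (T.card : ℝ) ≤ c * x := by
    have h1 : T ⊆ Ioc 0 ⌊c * x⌋₊ := fun p hp ↦
      Finset.mem_Ioc.2 ⟨(hmem p hp).1.pos, Nat.le_floor (hmem p hp).2.2⟩
    have h2 := card_le_card h1
    rw [Nat.card_Ioc, Nat.sub_zero] at h2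
    exact (Nat.cast_le.2 h2).trans (Nat.floor_le (by positivity))
  rw [← sum_filter_not_add_sum_filter T fun p : ℕ ↦ (p : ℝ) ^ (-η) < ‖b p‖]
  refine add_le_add ?_ ?_
  · refine (sum_le_card_nsmul _ _ ((x ^ (-η)) ^ 2) fun p hp ↦ ?_).trans ?_
    · obtain ⟨hpT, hp⟩ := Finset.mem_filter.1 hp
      have hle : (p : ℝ) ^ (-η) ≤ x ^ (-η) :=
        Real.rpow_le_rpow_of_nonpos hx0 (hmem p hpT).2.1.le (by linarith)
      have := (not_lt.1 hp).trans hle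
      gcongr
    · rw [nsmul_eq_mul]
      gcongr
      exact (Nat.cast_le.2 (card_filter_le _ _)).trans hcard
  · rw [← nsmul_eq_mul]
    refine sum_le_card_nsmul _ _ _ fun p hp ↦ ?_
    obtain ⟨hpT, -⟩ := Finset.mem_filter.1 hp
    have hC : 0 ≤ C := by
      have h2 : (0 : ℝ) < ((2 : ℕ) : ℝ) ^ ε := by positivity
      exact nonneg_of_mul_nonneg_left ((norm_nonneg _).trans (hb 2 Nat.prime_two)) h2
    have := (hb p (hmem p hpT).1).trans
      (mul_le_mul_of_nonneg_left
        (Real.rpow_le_rpow (by positivity) (hmem p hpT).2.2 hε.le) hC)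
    gcongr

end PrimesInShortIntervals

open scoped Classical in
/-- If `b(p) ≪ p^ε` for every `ε > 0` and
`(1/((log x)^m π(x))) ∑_{p≤x} |b(p)|² → κ > 0`, then for every `c > 1`, `η > 0`, `ε > 0`
the number of primes `p` with `x < p ≤ cx` and `|b(p)| > p^{-η}` is `≫ x^{1-ε}`. -/
theorem statement_5 (b : ℕ → ℂ) (m : ℕ) (κ : ℝ) (hκ : 0 < κ)
    (hb : ∀ ε : ℝ, 0 < ε → ∃ C : ℝ, 0 < C ∧ ∀ p : ℕ, p.Prime → ‖b p‖ ≤ C * (p : ℝ) ^ ε)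
    (hSel : Tendsto (fun x : ℝ =>
        (∑ p ∈ primesUpTo x, ‖b p‖ ^ 2) / ((Real.log x) ^ m * ((primesUpTo x).card : ℝ)))
      atTop (nhds κ)) :
    ∀ c : ℝ, 1 < c → ∀ η : ℝ, 0 < η → ∀ ε : ℝ, 0 < ε →
      ∃ A : ℝ, 0 < A ∧ ∃ x₀ : ℝ, ∀ x : ℝ, x₀ ≤ x →
        A * x ^ (1 - ε) ≤
          (((Finset.range (⌊c * x⌋₊ + 1)).filter fun p =>
              Nat.Prime p ∧ x < (p : ℝ) ∧ (p : ℝ) ≤ c * x ∧ (p : ℝ) ^ (-η) < ‖b p‖).card : ℝ) := by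
  intro c hc η hη ε hε
  have hc0 : 0 < c := by linarith
  obtain ⟨C, hC, hbC⟩ := hb (ε / 4) (by positivity)
  obtain ⟨δ, hδ, hsum⟩ := exists_pos_le_sum_normSq_sdiff hκ hSel hc
  refine ⟨δ / 2 / (C * c ^ (ε / 4)) ^ 2, by positivity, ?_⟩
  rw [← eventually_atTop]
  have hlogη := (isLittleO_log_rpow_atTop (r := 2 * η) (by positivity)).bound
    (show 0 < δ / (2 * c) by positivity)
  have hlogε := (isLittleO_log_rpow_atTop (r := ε / 2) (by positivity)).bound one_pos
  filter_upwards [hsum, hlogη, hlogε, eventually_gt_atTop 1] with x hx hlη hlε hx1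
  have hx0 : 0 < x := by linarith
  have hL : 0 < Real.log x := Real.log_pos hx1
  rw [Real.norm_of_nonneg hL.le, Real.norm_of_nonneg (by positivity)] at hlη hlε
  have hset : (Finset.range (⌊c * x⌋₊ + 1)).filter (fun p : ℕ ↦
      Nat.Prime p ∧ x < (p : ℝ) ∧ (p : ℝ) ≤ c * x ∧ (p : ℝ) ^ (-η) < ‖b p‖) =
      (primesUpTo (c * x) \ primesUpTo x).filter fun p : ℕ ↦ (p : ℝ) ^ (-η) < ‖b p‖ := by
    ext p
    rw [Finset.mem_filter, Finset.mem_filter, mem_primesUpTo_sdiff hx0.le (by positivity),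
      Finset.mem_range, Order.lt_add_one_iff, Nat.le_floor_iff (by positivity)]
    tauto
  rw [hset]
  have hle := hx.trans (sum_normSq_sdiff_le hc hη (by positivity) hbC hx1.le)
  set N : ℝ := (((primesUpTo (c * x) \ primesUpTo x).filter
    fun p : ℕ ↦ (p : ℝ) ^ (-η) < ‖b p‖).card : ℝ)
  have hsmall : c * x * (x ^ (-η)) ^ 2 ≤ δ / 2 * (x / Real.log x) := by
    have h1 : (x ^ (-η)) ^ 2 = (x ^ (2 * η))⁻¹ := by
      rw [← Real.rpow_natCast, ← Real.rpow_mul hx0.le, ← Real.rpow_neg hx0.le]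
      congr 1
      push_cast
      ring
    have h2 : 0 < x ^ (2 * η) := by positivity
    rw [h1, ← div_eq_mul_inv, ← mul_div_assoc, div_le_div_iff₀ h2 hL]
    calc c * x * Real.log x ≤ c * x * (δ / (2 * c) * x ^ (2 * η)) := by gcongr
      _ = δ / 2 * x * x ^ (2 * η) := by field_simp
  have hpow : (C * (c * x) ^ (ε / 4)) ^ 2 = (C * c ^ (ε / 4)) ^ 2 * x ^ (ε / 2) := by
    rw [Real.mul_rpow hc0.le hx0.le, ← mul_assoc, mul_pow (C * c ^ (ε / 4)), ← Real.rpow_natCast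
      (x ^ (ε / 4)), ← Real.rpow_mul hx0.le]
    congr 2
    push_cast
    ring
  rw [hpow] at hle
  have hbig : x ^ (1 - ε) * x ^ (ε / 2) ≤ x / Real.log x := by
    rw [le_div_iff₀ hL]
    calc x ^ (1 - ε) * x ^ (ε / 2) * Real.log x
        ≤ x ^ (1 - ε) * x ^ (ε / 2) * (1 * x ^ (ε / 2)) := by gcongr
      _ = x := by
        rw [one_mul, ← Real.rpow_add hx0, ← Real.rpow_add hx0]
        ring_nf
        exact Real.rpow_one x
  have hK : 0 < (C * c ^ (ε / 4)) ^ 2 := by positivity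
  rw [div_mul_eq_mul_div, div_le_iff₀ hK]
  refine le_of_mul_le_mul_right ?_ (show 0 < x ^ (ε / 2) by positivity)
  have := mul_le_mul_of_nonneg_left hbig (show 0 ≤ δ / 2 by positivity)
  linarith
end

section
/- Let L be a function of class S_A. Then for every δ > 0 there exists a real number θ ≠ 0 such that the function s ↦ L(s) + L(s + iθ) does not vanish at any point s with Re(s) ≥ 1 + δ. -/
open Complex Filter Finset

/-- `L` belongs to the class `S_A`, with Dirichlet coefficients `a n` and
Euler-product coefficients `b p k` (the coefficient of `p^{-ks}`): for `Re s > 1`,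
`L s = ∑_{n ≥ 1} a n / n^s = ∏_p exp (∑_{k ≥ 1} b p k / p^{k s})`, both converging
absolutely, with `a n ≪ n^ε` for all `ε > 0`, `‖b p k‖ ≤ C p^{kθ}` for some `θ < 1/2`,
and `a p = b p 1` for every prime `p`. -/
structure IsSA (L : ℂ → ℂ) (a : ℕ → ℂ) (b : ℕ → ℕ → ℂ) : Prop where
  dirichlet_abs : ∀ s : ℂ, 1 < s.re →
    Summable fun n : ℕ => ‖a (n + 1) / ((n : ℂ) + 1) ^ s‖
  dirichlet : ∀ s : ℂ, 1 < s.re →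
    HasSum (fun n : ℕ => a (n + 1) / ((n : ℂ) + 1) ^ s) (L s)
  euler_abs : ∀ s : ℂ, 1 < s.re →
    Summable fun pk : Nat.Primes × ℕ =>
      ‖b (pk.1 : ℕ) (pk.2 + 1) / ((pk.1 : ℕ) : ℂ) ^ (((pk.2 : ℂ) + 1) * s)‖
  euler : ∀ s : ℂ, 1 < s.re →
    HasProd (fun p : Nat.Primes =>
      Complex.exp (∑' k : ℕ, b (p : ℕ) (k + 1) / ((p : ℕ) : ℂ) ^ (((k : ℂ) + 1) * s))) (L s)
  a_growth : ∀ ε : ℝ, 0 < ε → ∃ C : ℝ, 0 < C ∧ ∀ n : ℕ, 1 ≤ n → ‖a n‖ ≤ C * (n : ℝ) ^ ε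
  b_bound : ∃ C : ℝ, 0 < C ∧ ∃ θ : ℝ, θ < 1 / 2 ∧
    ∀ p : ℕ, p.Prime → ∀ k : ℕ, 1 ≤ k → ‖b p k‖ ≤ C * (p : ℝ) ^ ((k : ℝ) * θ)
  ap_eq_bp : ∀ p : ℕ, p.Prime → a p = b p 1

/-- The Selberg-type normality condition `(1/π(x)) ∑_{p ≤ x} ‖a p‖² → κ` as `x → ∞`. -/
def SelbergCond (a : ℕ → ℂ) (κ : ℝ) : Prop :=
  Tendsto (fun x : ℝ => (∑ p ∈ primesUpTo x, ‖a p‖ ^ 2) / ((primesUpTo x).card : ℝ))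
    atTop (nhds κ)

/-- The set `S` contains at least `x` elements. -/
def AtLeastCard (S : Set ℂ) (x : ℝ) : Prop :=
  ∃ F : Finset ℂ, ↑F ⊆ S ∧ x ≤ (F.card : ℝ)

/-- The term `b(p^{k+1}) p^{-(k+1)s}` of the logarithm of the Euler product. -/
noncomputable def eulerLogTerm (b : ℕ → ℕ → ℂ) (s : ℂ) (pk : Nat.Primes × ℕ) : ℂ :=
  b (pk.1 : ℕ) (pk.2 + 1) / ((pk.1 : ℕ) : ℂ) ^ (((pk.2 : ℂ) + 1) * s)

/-- The unimodular factor `p^{-i(k+1)θ}` picked up by a term under the shift `s ↦ s + iθ`. -/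
noncomputable def shiftFactor (pk : Nat.Primes × ℕ) (θ : ℝ) : ℂ :=
  Complex.exp (-(Real.log (pk.1 : ℕ) * ((pk.2 : ℝ) + 1) * θ : ℝ) * Complex.I)

lemma norm_shiftFactor (pk : Nat.Primes × ℕ) (θ : ℝ) : ‖shiftFactor pk θ‖ = 1 := by
  rw [shiftFactor, ← Complex.ofReal_neg, Complex.norm_exp_ofReal_mul_I]

lemma norm_shiftFactor_sub_one_le (pk : Nat.Primes × ℕ) (θ : ℝ) : ‖shiftFactor pk θ - 1‖ ≤ 2 := by
  refine (norm_sub_le _ _).trans ?_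
  rw [norm_shiftFactor, norm_one]
  norm_num

lemma tendsto_shiftFactor (pk : Nat.Primes × ℕ) :
    Tendsto (shiftFactor pk) (nhds 0) (nhds 1) := by
  have h : Continuous (shiftFactor pk) := by
    unfold shiftFactor
    fun_prop
  simpa [shiftFactor] using h.tendsto 0

lemma eulerLogTerm_add_mul_I (b : ℕ → ℕ → ℂ) (s : ℂ) (θ : ℝ) (pk : Nat.Primes × ℕ) :
    eulerLogTerm b (s + θ * Complex.I) pk = eulerLogTerm b s pk * shiftFactor pk θ := by
  have hp : ((pk.1 : ℕ) : ℂ) ≠ 0 := Nat.cast_ne_zero.mpr pk.1.prop.ne_zero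
  rw [eulerLogTerm, eulerLogTerm, shiftFactor, div_eq_mul_inv, div_eq_mul_inv, ← Complex.cpow_neg,
    ← Complex.cpow_neg, Complex.cpow_def_of_ne_zero hp, Complex.cpow_def_of_ne_zero hp, mul_assoc,
    ← Complex.exp_add, ← Complex.natCast_log]
  congr 2
  push_cast
  ring

lemma norm_eulerLogTerm_le (b : ℕ → ℕ → ℂ) {s w : ℂ} (h : w.re ≤ s.re) (pk : Nat.Primes × ℕ) :
    ‖eulerLogTerm b s pk‖ ≤ ‖eulerLogTerm b w pk‖ := by
  have hp : 0 < (pk.1 : ℕ) := pk.1.prop.pos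
  rw [eulerLogTerm, eulerLogTerm, norm_div, norm_div]
  refine div_le_div_of_nonneg_left (norm_nonneg _) (Complex.norm_natCast_cpow_pos_of_pos hp _)
    (Complex.norm_natCast_cpow_le_norm_natCast_cpow_of_pos hp ?_)
  have hre (z : ℂ) : (((pk.2 : ℂ) + 1) * z).re = ((pk.2 : ℝ) + 1) * z.re := by simp
  rw [hre, hre]
  gcongr

/-- In the half-plane `Re s > 1`, `L` is the exponential of an absolutely convergent series. -/
lemma IsSA.eq_exp_tsum {L : ℂ → ℂ} {a : ℕ → ℂ} {b : ℕ → ℕ → ℂ} (hL : IsSA L a b) {s : ℂ}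
    (hs : 1 < s.re) : L s = Complex.exp (∑' pk, eulerLogTerm b s pk) := by
  have hsum : Summable (eulerLogTerm b s) := (hL.euler_abs s hs).of_norm
  exact (hL.euler s hs).unique
    (hsum.hasSum.prod_fiberwise fun p => (hsum.prod_factor p).hasSum).cexp

/-- The majorant at `w` for the change of the logarithm of the Euler product under a shift by `iθ`
tends to `0` with `θ`; it applies uniformly in the half-plane `Re s ≥ Re w`. -/
lemma tendsto_tsum_norm_eulerLogTerm_mul_shift {b : ℕ → ℕ → ℂ} {w : ℂ}
    (hw : Summable fun pk => ‖eulerLogTerm b w pk‖) :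
    Tendsto (fun θ : ℝ => ∑' pk, ‖eulerLogTerm b w pk‖ * ‖shiftFactor pk θ - 1‖)
      (nhds 0) (nhds 0) := by
  have key := tendsto_tsum_of_dominated_convergence
    (f := fun θ pk => ‖eulerLogTerm b w pk‖ * ‖shiftFactor pk θ - 1‖) (g := fun _ => (0 : ℝ))
    (𝓕 := nhds 0) (hw.mul_right 2)
    (fun pk => by
      simpa using ((tendsto_shiftFactor pk).sub_const 1).norm.const_mul ‖eulerLogTerm b w pk‖)
    (Eventually.of_forall fun θ pk => by
      rw [norm_mul, norm_norm, norm_norm]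
      gcongr
      exact norm_shiftFactor_sub_one_le pk θ)
  simpa using key

/-- For `L ∈ S_A` and every `δ > 0` there is a real `θ ≠ 0` such that
`s ↦ L(s) + L(s + iθ)` does not vanish on `Re s ≥ 1 + δ`. -/
theorem statement_9 (L : ℂ → ℂ) (a : ℕ → ℂ) (b : ℕ → ℕ → ℂ) (hL : IsSA L a b)
    (δ : ℝ) (hδ : 0 < δ) :
    ∃ θ : ℝ, θ ≠ 0 ∧ ∀ s : ℂ, 1 + δ ≤ s.re → L s + L (s + θ * Complex.I) ≠ 0 := by
  set w : ℂ := ((1 + δ : ℝ) : ℂ)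
  have hwre : w.re = 1 + δ := Complex.ofReal_re _
  have hwsum : Summable fun pk => ‖eulerLogTerm b w pk‖ := hL.euler_abs w (by linarith)
  obtain ⟨θ, hθ, hθ0⟩ : ∃ θ : ℝ,
      (∑' pk, ‖eulerLogTerm b w pk‖ * ‖shiftFactor pk θ - 1‖ < 1 / 2) ∧ θ ≠ 0 := by
    have hev := (tendsto_tsum_norm_eulerLogTerm_mul_shift hwsum).eventually_lt_const
      (show (0 : ℝ) < 1 / 2 by norm_num)
    exact ((hev.filter_mono nhdsWithin_le_nhds).and
      (self_mem_nhdsWithin (s := {0}ᶜ))).exists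
  refine ⟨θ, hθ0, fun s hs hzero => ?_⟩
  have hs1 : 1 < s.re := by linarith
  have hs1' : 1 < (s + θ * Complex.I).re := by simpa using hs1
  have hsum : Summable (eulerLogTerm b s) := (hL.euler_abs s hs1).of_norm
  have hsum' : Summable (eulerLogTerm b (s + θ * Complex.I)) := (hL.euler_abs _ hs1').of_norm
  set z : ℂ := ∑' pk, (eulerLogTerm b (s + θ * Complex.I) pk - eulerLogTerm b s pk) with hz
  have hznorm : ‖z‖ < 1 / 2 := by
    refine lt_of_le_of_lt (tsum_of_norm_bounded (Summable.hasSum ?_) fun pk => ?_) hθ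
    · refine (hwsum.mul_right 2).of_nonneg_of_le (fun _ => by positivity) fun pk => ?_
      gcongr
      exact norm_shiftFactor_sub_one_le pk θ
    · rw [eulerLogTerm_add_mul_I, ← mul_sub_one, norm_mul]
      gcongr
      exact norm_eulerLogTerm_le b (by linarith) pk
  have hshift : L (s + θ * Complex.I) = L s * Complex.exp z := by
    rw [hL.eq_exp_tsum hs1, hL.eq_exp_tsum hs1', ← Complex.exp_add, hz, hsum'.tsum_sub hsum]
    congr 1
    ring
  have hLs : L s ≠ 0 := hL.eq_exp_tsum hs1 ▸ Complex.exp_ne_zero _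
  have hexp : Complex.exp z = -1 := by
    apply mul_left_cancel₀ hLs
    linear_combination hzero - hshift
  have hle := Complex.norm_exp_sub_one_le (x := z) (by linarith)
  rw [hexp] at hle
  norm_num at hle
  linarith
end

section
/- For every δ > 0 there exist c > 0 and T₀ > 0 such that for all T ≥ T₀, the set {s ∈ ℂ : 1 < Re(s) < 1 + δ, Im(s) ∈ [0,T], ζ(s)² − ζ(2s) = 0} contains at least cT elements; in particular the Euler–Zagier double zeta value ζ₂(s,s) = (ζ(s)² − ζ(2s))/2 has infinitely many zeros in the half-plane Re(s) > 1. -/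
open Complex Filter

section

open MeasureTheory Set Topology

theorem integral_mFourier_eq_zero {ι : Type*} [Fintype ι] {n : ι → ℤ} (hn : n ≠ 0) :
    ∫ x : UnitAddTorus ι, UnitAddTorus.mFourier n x = 0 := by
  rw [UnitAddTorus.mFourier, ContinuousMap.coe_mk, integral_fintype_prod_volume_eq_prod]
  obtain ⟨i, hi⟩ := Function.ne_iff.mp hn
  refine Finset.prod_eq_zero (Finset.mem_univ i) ?_
  exact integral_eq_zero_of_add_right_eq_neg (fourier_add_half_inv_index hi one_pos)

theorem mFourier_linear_flow {ι : Type*} [Fintype ι] (n : ι → ℤ) (lam : ι → ℝ) (t : ℝ) :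
    UnitAddTorus.mFourier n (fun i => ((lam i * t : ℝ) : UnitAddCircle)) =
      exp ((2 * Real.pi * (∑ i, n i * lam i : ℝ) * I : ℂ) * t) := by
  simp only [UnitAddTorus.mFourier, ContinuousMap.coe_mk, fourier_coe_apply, ← exp_sum]
  congr 1
  push_cast
  simp only [Finset.mul_sum, Finset.sum_mul]
  refine Finset.sum_congr rfl fun i _ => ?_
  ring

theorem norm_integral_exp_mul_le {c : ℂ} (hc : c ≠ 0) (hre : c.re = 0) (a b : ℝ) :
    ‖∫ t in a..b, exp (c * t)‖ ≤ 2 / ‖c‖ := by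
  rw [integral_exp_mul_complex hc, norm_div]
  gcongr
  refine (norm_sub_le _ _).trans ?_
  simp [norm_exp, hre]
  norm_num

theorem continuous_linear_flow {ι : Type*} (lam : ι → ℝ) :
    Continuous fun t : ℝ => (fun i => ((lam i * t : ℝ) : UnitAddCircle)) :=
  continuous_pi fun _ => (AddCircle.continuous_mk' 1).comp (continuous_const.mul continuous_id)

/-- Quantitative equidistribution of a linear flow for trigonometric polynomials. -/
theorem exists_bound_integral_linear_flow {ι : Type*} [Fintype ι] {lam : ι → ℝ}
    (hlam : ∀ n : ι → ℤ, ∑ i, n i * lam i = 0 → n = 0) {g : C(UnitAddTorus ι, ℂ)}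
    (hg : g ∈ Submodule.span ℂ (range (UnitAddTorus.mFourier (d := ι)))) :
    ∃ C : ℝ, ∀ a b : ℝ,
      ‖(∫ t in a..b, g (fun i => ((lam i * t : ℝ) : UnitAddCircle))) -
        (b - a : ℝ) * ∫ x, g x‖ ≤ C := by
  have hflow (f : C(UnitAddTorus ι, ℂ)) (a b : ℝ) : IntervalIntegrable
      (fun t : ℝ => f (fun i => ((lam i * t : ℝ) : UnitAddCircle))) volume a b :=
    (f.continuous.comp (continuous_linear_flow lam)).intervalIntegrable a b
  have hintegrable (f : C(UnitAddTorus ι, ℂ)) : Integrable f :=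
    f.continuous.integrable_of_hasCompactSupport (HasCompactSupport.of_compactSpace _)
  induction hg using Submodule.span_induction with
  | mem f hf =>
    obtain ⟨n, rfl⟩ := hf
    simp only [mFourier_linear_flow]
    by_cases hn : n = 0
    · subst hn
      refine ⟨0, fun a b => ?_⟩
      simp [UnitAddTorus.mFourier_zero, Measure.real, volume_pi, Measure.pi_univ]
    · refine ⟨2 / ‖(2 * Real.pi * (∑ i, n i * lam i : ℝ) * I : ℂ)‖, fun a b => ?_⟩
      rw [integral_mFourier_eq_zero hn, mul_zero, sub_zero]
      refine norm_integral_exp_mul_le ?_ ?_ a b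
      · have := mt (hlam n) hn
        simp only [ne_eq, mul_eq_zero, I_ne_zero, ofReal_eq_zero, Real.pi_ne_zero, this]
        norm_num
      · rw [mul_I_re, neg_eq_zero]
        norm_cast
  | zero => exact ⟨0, by simp⟩
  | add f g _ _ hf hg =>
    obtain ⟨C, hC⟩ := hf
    obtain ⟨D, hD⟩ := hg
    refine ⟨C + D, fun a b => ?_⟩
    refine le_trans (le_of_eq ?_) ((norm_add_le _ _).trans (add_le_add (hC a b) (hD a b)))
    simp only [ContinuousMap.add_apply]
    rw [intervalIntegral.integral_add (hflow f a b) (hflow g a b),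
      integral_add (hintegrable f) (hintegrable g)]
    congr 1
    ring
  | smul c f _ hf =>
    obtain ⟨C, hC⟩ := hf
    refine ⟨‖c‖ * C, fun a b => ?_⟩
    refine le_trans (le_of_eq ?_) (mul_le_mul_of_nonneg_left (hC a b) (norm_nonneg c))
    simp only [ContinuousMap.smul_apply, smul_eq_mul]
    rw [intervalIntegral.integral_const_mul, integral_const_mul, ← norm_mul]
    congr 1
    ring

/-- **Kronecker's theorem** in finite dimension: visits of a linear flow with rationally independent
frequencies to a nonempty open subset of the torus are relatively dense. -/
theorem exists_linear_flow_mem_of_fintype {ι : Type*} [Fintype ι] {lam : ι → ℝ}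
    (hlam : ∀ n : ι → ℤ, ∑ i, n i * lam i = 0 → n = 0) {U : Set (UnitAddTorus ι)}
    (hU : IsOpen U) (hne : U.Nonempty) :
    ∃ L : ℝ, 0 < L ∧ ∀ a : ℝ, ∃ t ∈ Icc a (a + L),
      (fun i => ((lam i * t : ℝ) : UnitAddCircle)) ∈ U := by
  obtain ⟨x₀, hx₀⟩ := hne
  obtain ⟨f, hf0, hf1, hf01⟩ := exists_continuous_zero_one_of_isClosed hU.isClosed_compl
    (isClosed_singleton (x := x₀)) (by simpa using hx₀)
  have hpos : 0 < ∫ x, f x :=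
    f.continuous.integral_pos_of_hasCompactSupport_nonneg_nonzero
      (HasCompactSupport.of_compactSpace _) (fun x => (hf01 x).1) (x := x₀)
      (by rw [hf1 rfl]; simp)
  set J := ∫ x, f x with hJ
  let F : C(UnitAddTorus ι, ℂ) := ⟨fun x => (f x : ℂ), by fun_prop⟩
  have hF : F ∈ closure (Submodule.span ℂ (range (UnitAddTorus.mFourier (d := ι))) : Set _) := by
    rw [← Submodule.topologicalClosure_coe, UnitAddTorus.span_mFourier_closure_eq_top]
    trivial
  obtain ⟨g, hg, hgF⟩ := Metric.mem_closure_iff.mp hF (J / 3) (by positivity)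
  rw [dist_eq_norm] at hgF
  have hpt (x) : ‖F x - g x‖ ≤ J / 3 := ((F - g).norm_coe_le_norm x).trans hgF.le
  obtain ⟨C, hC⟩ := exists_bound_integral_linear_flow hlam hg
  have hC0 : 0 ≤ C := (norm_nonneg _).trans (hC 0 0)
  refine ⟨3 * C / J + 1, by positivity, fun a => ?_⟩
  set L := 3 * C / J + 1 with hL
  by_contra! hcon
  have hLpos : 0 < L := by positivity
  have hCJ := hC a (a + L)
  have hintegrable (f : C(UnitAddTorus ι, ℂ)) : Integrable f :=
    f.continuous.integrable_of_hasCompactSupport (HasCompactSupport.of_compactSpace _)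
  have h1 : ‖∫ t in a..(a + L), g (fun i => ((lam i * t : ℝ) : UnitAddCircle))‖ ≤ J / 3 * L := by
    have := intervalIntegral.norm_integral_le_of_norm_le_const (a := a) (b := a + L) (C := J / 3)
      (f := fun t : ℝ => g (fun i => ((lam i * t : ℝ) : UnitAddCircle))) ?_
    · simpa [abs_of_pos hLpos] using this
    intro t ht
    rw [uIoc_of_le (by linarith)] at ht
    have h0 : F (fun i => ((lam i * t : ℝ) : UnitAddCircle)) = 0 := by
      have := hf0 (hcon t ⟨ht.1.le, ht.2⟩)
      simpa [F] using this
    have := hpt (fun i => ((lam i * t : ℝ) : UnitAddCircle))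
    rwa [h0, zero_sub, norm_neg] at this
  have hFJ : ∫ x, F x = (J : ℂ) := by
    rw [hJ]; exact integral_ofReal
  have h2 : ‖(J : ℂ) - ∫ x, g x‖ ≤ J / 3 := by
    rw [← hFJ, ← integral_sub (hintegrable F) (hintegrable g)]
    have hv : volume.real (univ : Set (UnitAddTorus ι)) = 1 := by
      simp [Measure.real, volume_pi, Measure.pi_univ]
    refine (norm_integral_le_of_norm_le_const (Eventually.of_forall hpt)).trans ?_
    rw [hv, mul_one]
  have h3 : J * L ≤ C + J / 3 * L + J / 3 * L := by
    have e : ((J * L : ℝ) : ℂ) = ((∫ t in a..(a + L), g (fun i => ((lam i * t : ℝ) : UnitAddCircle)))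
        - ((∫ t in a..(a + L), g (fun i => ((lam i * t : ℝ) : UnitAddCircle))) -
          (a + L - a : ℝ) * ∫ x, g x)) + L * ((J : ℂ) - ∫ x, g x) := by
      push_cast; ring
    have e2 : ‖((J * L : ℝ) : ℂ)‖ = J * L := by
      rw [norm_real, Real.norm_of_nonneg (by positivity)]
    rw [← e2, e]
    refine (norm_add_le _ _).trans ?_
    have h4 := norm_sub_le (∫ t in a..(a + L), g (fun i => ((lam i * t : ℝ) : UnitAddCircle)))
      ((∫ t in a..(a + L), g (fun i => ((lam i * t : ℝ) : UnitAddCircle))) -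
          (a + L - a : ℝ) * ∫ x, g x)
    have h5 : ‖(L : ℂ) * ((J : ℂ) - ∫ x, g x)‖ ≤ J / 3 * L := by
      rw [norm_mul, norm_real, Real.norm_of_nonneg hLpos.le, mul_comm]
      gcongr
    linarith
  have h6 : J * L = 3 * C + J := by rw [hL]; field_simp
  nlinarith

/-- **Kronecker's theorem** for arbitrary families of rationally independent frequencies. -/
theorem exists_linear_flow_mem {ι : Type*} {lam : ι → ℝ} (hlam : LinearIndependent ℤ lam)
    {U : Set (ι → UnitAddCircle)} (hU : IsOpen U) (hne : U.Nonempty) :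
    ∃ L : ℝ, 0 < L ∧ ∀ a : ℝ, ∃ t ∈ Icc a (a + L),
      (fun i => ((lam i * t : ℝ) : UnitAddCircle)) ∈ U := by
  obtain ⟨x₀, hx₀⟩ := hne
  obtain ⟨J, u, hu, hJU⟩ := isOpen_pi_iff.mp hU x₀ hx₀
  have hind : ∀ n : J → ℤ, ∑ i, n i * lam i = 0 → n = 0 := by
    intro n hn
    have h := hlam.comp (fun i : J => (i : ι)) Subtype.val_injective
    rw [Fintype.linearIndependent_iff] at h
    exact funext (h n (by simpa using hn))
  obtain ⟨L, hL, hmem⟩ := exists_linear_flow_mem_of_fintype hind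
    (U := univ.pi fun i : J => u i) (isOpen_set_pi finite_univ fun i _ => (hu i i.2).1)
    ⟨fun i => x₀ i, fun i _ => (hu i i.2).2⟩
  refine ⟨L, hL, fun a => ?_⟩
  obtain ⟨t, ht, hmt⟩ := hmem a
  exact ⟨t, ht, hJU fun i hi => hmt ⟨i, hi⟩ trivial⟩

theorem factorization_prod_primes_pow (s : Finset Nat.Primes) (k : Nat.Primes → ℕ)
    {q : Nat.Primes} (hq : q ∈ s) : (∏ p ∈ s, (p : ℕ) ^ k p).factorization q = k q := by
  rw [Nat.factorization_prod fun p _ => pow_ne_zero _ p.2.ne_zero, Finset.sum_apply',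
    Finset.sum_eq_single_of_mem q hq]
  · simp [q.2.factorization_self]
  · intro p _ hpq
    have : (p : ℕ) ≠ q := fun h => hpq (Subtype.ext h)
    simp [p.2.factorization, this]

/-- Logarithms of the primes are linearly independent over `ℤ`. -/
theorem linearIndependent_log_primes :
    LinearIndependent ℤ fun p : Nat.Primes => Real.log p := by
  rw [linearIndependent_iff']
  intro s n hn q hq
  have hlog (k : Nat.Primes → ℕ) :
      Real.log (∏ p ∈ s, (p : ℕ) ^ k p : ℕ) = ∑ p ∈ s, k p * Real.log p := by
    push_cast
    rw [Real.log_prod fun p _ => pow_ne_zero _ (Nat.cast_ne_zero.mpr p.2.ne_zero)]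
    simp
  have hpos (k : Nat.Primes → ℕ) : (0 : ℝ) < (∏ p ∈ s, (p : ℕ) ^ k p : ℕ) :=
    Nat.cast_pos.mpr (Finset.prod_pos fun p _ => pow_pos p.2.pos _)
  have heq : ∏ p ∈ s, (p : ℕ) ^ (n p).toNat = ∏ p ∈ s, (p : ℕ) ^ (-n p).toNat := by
    refine Nat.cast_injective (R := ℝ) (Real.log_injOn_pos (hpos _) (hpos _) ?_)
    rw [hlog, hlog, ← sub_eq_zero, ← Finset.sum_sub_distrib, ← hn]
    refine Finset.sum_congr rfl fun p _ => ?_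
    rw [← sub_mul, zsmul_eq_mul]
    congr 1
    exact_mod_cast Int.toNat_sub_toNat_neg (n p)
  have := congrArg (fun m => m.factorization q) heq
  simp only [factorization_prod_primes_pow s (fun p => (n p).toNat) hq,
    factorization_prod_primes_pow s (fun p => (-n p).toNat) hq] at this
  lia

/-- The completely multiplicative extension of a function on the primes (with value `1` at `0`). -/
def primeExt {M : Type*} [CommMonoid M] (y : ℕ → M) (n : ℕ) : M :=
  n.factorization.prod fun p k => y p ^ k

section primeExt

variable {M : Type*} [CommMonoid M]

theorem primeExt_one_right (y : ℕ → M) : primeExt y 1 = 1 := by simp [primeExt]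

theorem primeExt_one_left (n : ℕ) : primeExt (fun _ => (1 : M)) n = 1 := by simp [primeExt]

theorem primeExt_prime (y : ℕ → M) {p : ℕ} (hp : p.Prime) : primeExt y p = y p := by
  simp [primeExt, hp.factorization]

theorem primeExt_mul (y : ℕ → M) {m n : ℕ} (hm : m ≠ 0) (hn : n ≠ 0) :
    primeExt y (m * n) = primeExt y m * primeExt y n := by
  rw [primeExt, Nat.factorization_mul hm hn]
  exact Finsupp.prod_add_index' (by simp) (by simp [pow_add])

theorem map_primeExt {N : Type*} [CommMonoid N] (f : M →* N) (y : ℕ → M) (n : ℕ) :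
    f (primeExt y n) = primeExt (fun p => f (y p)) n := by
  simp [primeExt, map_finsuppProd]

theorem primeExt_congr {y z : ℕ → M} {n : ℕ} (h : ∀ p, p.Prime → p ≤ n → y p = z p) :
    primeExt y n = primeExt z n := by
  refine Finsupp.prod_congr fun p hp => ?_
  rw [Nat.support_factorization] at hp
  rw [h p (Nat.prime_of_mem_primeFactors hp) (Nat.le_of_mem_primeFactors hp)]

theorem primeExt_restrict {f : ℕ → M} (h1 : f 1 = 1)
    (hmul : ∀ m n, m ≠ 0 → n ≠ 0 → f (m * n) = f m * f n) {n : ℕ} (hn : n ≠ 0) :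
    primeExt f n = f n := by
  induction n using Nat.recOnMul with
  | zero => exact absurd rfl hn
  | one => rw [primeExt_one_right, h1]
  | prime p hp => exact primeExt_prime f hp
  | mul a b iha ihb =>
    have ha : a ≠ 0 := left_ne_zero_of_mul hn
    have hb : b ≠ 0 := right_ne_zero_of_mul hn
    rw [primeExt_mul f ha hb, hmul a b ha hb, iha ha, ihb hb]

theorem norm_primeExt {K : Type*} [NormedField K] {y : ℕ → K} (hy : ∀ p, ‖y p‖ = 1) (n : ℕ) :
    ‖primeExt y n‖ = 1 := by
  have := map_primeExt (normHom : K →*₀ ℝ).toMonoidHom y n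
  simpa [hy, primeExt_one_left] using this

end primeExt

theorem summable_mul_rpow_neg {u : ℕ → ℝ} {C σ : ℝ} (hu : ∀ n, |u n| ≤ C) (hσ : 1 < σ) :
    Summable fun n : ℕ => u n * (n : ℝ) ^ (-σ) := by
  refine Summable.of_norm_bounded
    ((Real.summable_nat_rpow (p := -σ).mpr (by linarith)).mul_left C) fun n => ?_
  rw [norm_mul, Real.norm_of_nonneg (Real.rpow_nonneg n.cast_nonneg _)]
  exact mul_le_mul_of_nonneg_right (hu n) (Real.rpow_nonneg n.cast_nonneg _)

theorem norm_term_le_rpow (f : ℕ → ℂ) {s : ℂ} {σ : ℝ} (hσ : 0 < σ) (hs : σ ≤ s.re) (n : ℕ) :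
    ‖LSeries.term f s n‖ ≤ ‖f n‖ * (n : ℝ) ^ (-σ) := by
  rcases eq_or_ne n 0 with rfl | hn
  · simp [Real.zero_rpow (neg_ne_zero.mpr hσ.ne')]
  · rw [LSeries.term_of_ne_zero hn, norm_div, norm_natCast_cpow_of_pos (Nat.pos_of_ne_zero hn),
      div_eq_mul_inv, ← Real.rpow_neg n.cast_nonneg]
    have : (1 : ℝ) ≤ n := by exact_mod_cast Nat.one_le_iff_ne_zero.mpr hn
    gcongr

theorem LSeriesSummable_of_norm_le_one {f : ℕ → ℂ} (hf : ∀ n, ‖f n‖ ≤ 1) {s : ℂ} (hs : 1 < s.re) :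
    LSeriesSummable f s :=
  LSeriesSummable_of_bounded_of_one_lt_re (m := 1) (fun n _ => hf n) hs

theorem norm_LSeries_sub_le {f g : ℕ → ℂ} (hf : ∀ n, ‖f n‖ ≤ 1) (hg : ∀ n, ‖g n‖ ≤ 1)
    {s : ℂ} {σ : ℝ} (hσ : 1 < σ) (hs : σ ≤ s.re) :
    ‖LSeries f s - LSeries g s‖ ≤ ∑' n : ℕ, ‖f n - g n‖ * (n : ℝ) ^ (-σ) := by
  rw [← LSeries_sub (LSeriesSummable_of_norm_le_one hf (hσ.trans_le hs))
    (LSeriesSummable_of_norm_le_one hg (hσ.trans_le hs))]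
  refine tsum_of_norm_bounded (Summable.hasSum ?_)
    fun n => norm_term_le_rpow (f - g) (by linarith) hs n
  refine summable_mul_rpow_neg (C := 2) (fun n => ?_) hσ
  rw [abs_norm]
  exact (norm_sub_le _ _).trans (by linarith [hf n, hg n])

theorem norm_LSeries_le {f : ℕ → ℂ} (hf : ∀ n, ‖f n‖ ≤ 1) {s : ℂ} {σ : ℝ} (hσ : 1 < σ)
    (hs : σ ≤ s.re) : ‖LSeries f s‖ ≤ ∑' n : ℕ, (n : ℝ) ^ (-σ) := by
  refine tsum_of_norm_bounded (Summable.hasSum (Real.summable_nat_rpow.mpr (by linarith)))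
    fun n => (norm_term_le_rpow f (by linarith) hs n).trans ?_
  exact mul_le_of_le_one_left (Real.rpow_nonneg n.cast_nonneg _) (hf n)

/-- The function `n ↦ n ^ (-iτ)`, with value `1` at `0`. -/
noncomputable def twist (τ : ℝ) (n : ℕ) : ℂ := exp (-(Real.log n * τ * I))

theorem norm_twist (τ : ℝ) (n : ℕ) : ‖twist τ n‖ = 1 := by
  rw [twist, norm_exp, neg_re, ← ofReal_mul, mul_I_re, ofReal_im, neg_zero, neg_zero,
    Real.exp_zero]

theorem primeExt_twist (τ : ℝ) {n : ℕ} (hn : n ≠ 0) : primeExt (twist τ) n = twist τ n := by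
  refine primeExt_restrict (by simp [twist]) (fun a b ha hb => ?_) hn
  rw [twist, twist, twist, ← exp_add, Nat.cast_mul,
    Real.log_mul (Nat.cast_ne_zero.mpr ha) (Nat.cast_ne_zero.mpr hb)]
  push_cast
  ring_nf

theorem twist_eq_cpow (τ : ℝ) {n : ℕ} (hn : n ≠ 0) : twist τ n = (n : ℂ) ^ (-(τ * I)) := by
  rw [twist, cpow_def_of_ne_zero (Nat.cast_ne_zero.mpr hn), ← natCast_log]
  ring_nf

theorem riemannZeta_add_mul_I (τ : ℝ) {s : ℂ} (hs : 1 < s.re) :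
    riemannZeta (s + τ * I) = LSeries (twist τ) s := by
  rw [← LSeries_one_eq_riemannZeta (by simpa using hs)]
  refine tsum_congr fun n => ?_
  rcases eq_or_ne n 0 with rfl | hn
  · simp
  · rw [LSeries.term_of_ne_zero hn, LSeries.term_of_ne_zero hn, twist_eq_cpow τ hn, Pi.one_apply,
      cpow_add _ _ (Nat.cast_ne_zero.mpr hn), cpow_neg]
    field_simp

theorem riemannZeta_two_mul_add_mul_I (τ : ℝ) {s : ℂ} (hs : 1 < s.re) :
    riemannZeta (2 * (s + τ * I)) = LSeries (fun n => twist τ n ^ 2) (2 * s) := by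
  have h2 : 1 < (2 * s).re := by simp; linarith
  have := riemannZeta_add_mul_I (2 * τ) h2
  convert! this using 2
  · push_cast; ring
  · ext n
    rw [twist, twist, ← exp_nat_mul]
    push_cast
    ring_nf

/-- The vertical shifts `τ` for which `n ^ (-iτ)` is close to a given unimodular completely
multiplicative function, in a weighted `ℓ¹` norm, are relatively dense. -/
theorem exists_twist_close {y : ℕ → ℂ} (hy : ∀ p, ‖y p‖ = 1) {σ ε : ℝ} (hσ : 1 < σ) (hε : 0 < ε) :
    ∃ L : ℝ, 0 < L ∧ ∀ a : ℝ, ∃ τ ∈ Icc a (a + L),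
      ∑' n : ℕ, ‖twist τ n - primeExt y n‖ * (n : ℝ) ^ (-σ) < ε := by
  let Φ (x : Nat.Primes → UnitAddCircle) (p : ℕ) : ℂ :=
    if h : p.Prime then ((AddCircle.toCircle (x ⟨p, h⟩))⁻¹ : Circle) else 1
  have hΦ (x p) : ‖Φ x p‖ = 1 := by
    by_cases h : p.Prime
    · simp only [Φ, h, dite_true]
      exact Circle.norm_coe _
    · simp [Φ, h]
  have hΦc (p) : Continuous fun x => Φ x p := by
    by_cases h : p.Prime
    · simp only [Φ, h, dite_true]
      have : Continuous fun x : Nat.Primes → UnitAddCircle =>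
          (AddCircle.toCircle (x ⟨p, h⟩))⁻¹ :=
        continuous_inv.comp (AddCircle.continuous_toCircle.comp (continuous_apply _))
      exact continuous_subtype_val.comp this
    · simp only [Φ, h, dite_false]
      exact continuous_const
  let D (x : Nat.Primes → UnitAddCircle) : ℝ :=
    ∑' n : ℕ, ‖primeExt (Φ x) n - primeExt y n‖ * (n : ℝ) ^ (-σ)
  have hD : Continuous D := by
    refine continuous_tsum (u := fun n : ℕ => 2 * (n : ℝ) ^ (-σ)) (fun n => ?_) ?_ fun n x => ?_
    · refine ((Continuous.sub ?_ continuous_const).norm).mul continuous_const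
      exact continuous_finsetProd n.factorization.support fun p _ =>
        (continuous_pow (n.factorization p)).comp (hΦc p)
    · exact (Real.summable_nat_rpow.mpr (by linarith)).mul_left 2
    · rw [norm_mul, Real.norm_of_nonneg (Real.rpow_nonneg n.cast_nonneg _), norm_norm]
      gcongr
      exact (norm_sub_le _ _).trans (by rw [norm_primeExt (hΦ x), norm_primeExt hy]; norm_num)
  have hsurj (p : Nat.Primes) : ∃ x : UnitAddCircle, (AddCircle.toCircle x : ℂ)⁻¹ = y p := by
    obtain ⟨z, hz⟩ : ∃ z : Circle, (z : ℂ) = y p :=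
      ⟨⟨y p, mem_sphere_zero_iff_norm.mpr (hy p)⟩, rfl⟩
    obtain ⟨x, hx⟩ := (AddCircle.homeomorphCircle one_ne_zero).surjective
      z⁻¹
    refine ⟨x, ?_⟩
    rw [AddCircle.homeomorphCircle_apply] at hx
    rw [hx, Circle.coe_inv, inv_inv, hz]
  choose x₀ hx₀ using hsurj
  have hmem : x₀ ∈ D ⁻¹' Iio ε := by
    have (n : ℕ) : primeExt (Φ x₀) n = primeExt y n :=
      primeExt_congr fun p hp _ => by
        simp only [Φ, hp, dite_true, Circle.coe_inv]
        exact hx₀ ⟨p, hp⟩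
    simp [D, this, hε]
  obtain ⟨L, hL, hmem⟩ := exists_linear_flow_mem linearIndependent_log_primes
    (isOpen_Iio.preimage hD) ⟨x₀, hmem⟩
  refine ⟨2 * Real.pi * L, by positivity, fun a => ?_⟩
  obtain ⟨t, ht, htD⟩ := hmem (a / (2 * Real.pi))
  refine ⟨2 * Real.pi * t, ⟨?_, ?_⟩, ?_⟩
  · have := ht.1
    rwa [div_le_iff₀' (by positivity)] at this
  · have := mul_le_mul_of_nonneg_left ht.2 Real.two_pi_pos.le
    rwa [mul_add, mul_div_cancel₀ _ Real.two_pi_pos.ne'] at this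
  · refine lt_of_eq_of_lt (tsum_congr fun n => ?_) htD
    rcases eq_or_ne n 0 with rfl | hn
    · simp [Real.zero_rpow (show -σ ≠ 0 by linarith)]
    · rw [← primeExt_twist _ hn]
      congr 3
      refine primeExt_congr fun p hp _ => ?_
      simp only [Φ, hp, dite_true, AddCircle.toCircle_apply_mk, Circle.coe_inv, Circle.coe_exp,
        twist, ← exp_neg]
      push_cast
      ring_nf

/-- The real Dirichlet series with completely multiplicative coefficients extending `r`. -/
noncomputable def realSeries (r : ℕ → ℝ) (σ : ℝ) : ℝ := ∑' n : ℕ, primeExt r n * (n : ℝ) ^ (-σ)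

theorem realSeries_hasProd {r : ℕ → ℝ} (hr : ∀ p, ‖r p‖ = 1) {σ : ℝ} (hσ : 1 < σ) :
    HasProd (fun p : Nat.Primes => (1 - r p * (p : ℝ) ^ (-σ))⁻¹) (realSeries r σ) := by
  let f : ℕ →*₀ ℝ :=
    { toFun := fun n => primeExt r n * (n : ℝ) ^ (-σ)
      map_zero' := by simp [Real.zero_rpow (show -σ ≠ 0 by linarith)]
      map_one' := by simp [primeExt_one_right]
      map_mul' := fun a b => by
        rcases eq_or_ne a 0 with rfl | ha
        · simp [Real.zero_rpow (show -σ ≠ 0 by linarith)]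
        rcases eq_or_ne b 0 with rfl | hb
        · simp [Real.zero_rpow (show -σ ≠ 0 by linarith)]
        rw [primeExt_mul r ha hb, Nat.cast_mul, Real.mul_rpow a.cast_nonneg b.cast_nonneg]
        ring }
  have hsum : Summable fun n => ‖f n‖ :=
    (summable_mul_rpow_neg (C := 1) (fun n => (norm_primeExt hr n).le) hσ).norm
  have h := EulerProduct.eulerProduct_completely_multiplicative_hasProd hsum
  refine (congrArg (fun f => HasProd f _) (funext fun p => ?_)).mp h
  change (1 - primeExt r p * (p : ℝ) ^ (-σ))⁻¹ = _
  rw [primeExt_prime r p.2]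

theorem prime_rpow_neg_mem_Ioc (p : Nat.Primes) {σ : ℝ} (hσ : 1 < σ) :
    (p : ℝ) ^ (-σ) ∈ Ioc 0 (1 / 2 : ℝ) := by
  have hp : (2 : ℝ) ≤ p := by exact_mod_cast p.2.two_le
  refine ⟨Real.rpow_pos_of_pos (by linarith) _, ?_⟩
  calc (p : ℝ) ^ (-σ) ≤ (p : ℝ) ^ (-1 : ℝ) :=
        Real.rpow_le_rpow_of_exponent_le (by linarith) (by linarith)
    _ = 1 / p := by rw [Real.rpow_neg_one, one_div]
    _ ≤ 1 / 2 := by gcongr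

theorem realSeries_neg_one_mul {σ : ℝ} (hσ : 1 < σ) :
    realSeries (fun _ => -1) σ * realSeries (fun _ => 1) σ = realSeries (fun _ => 1) (2 * σ) := by
  refine HasProd.unique ((realSeries_hasProd (by simp) hσ).mul (realSeries_hasProd (by simp) hσ)) ?_
  refine (congrArg (fun f => HasProd f _) (funext fun p => ?_)).mp (realSeries_hasProd (by simp) (show 1 < 2 * σ by linarith))
  rw [← mul_inv]
  congr 1
  rw [show -(2 * σ) = -σ + -σ by ring, Real.rpow_add (by exact_mod_cast p.2.pos)]
  ring

theorem exists_mul_le_realSeries (P : ℕ) : ∃ c : ℝ, 0 < c ∧ ∀ σ : ℝ, 1 < σ →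
    c * realSeries (fun _ => 1) σ ≤ realSeries (fun p => if p ≤ P then -1 else 1) σ := by
  have hfin : {p : Nat.Primes | (p : ℕ) ≤ P}.Finite :=
    (finite_Iic P).preimage Subtype.val_injective.injOn
  refine ⟨∏ _p ∈ hfin.toFinset, (1 / 3 : ℝ), by positivity, fun σ hσ => ?_⟩
  let q (p : Nat.Primes) : ℝ :=
    if (p : ℕ) ≤ P then (1 - (p : ℝ) ^ (-σ)) / (1 + (p : ℝ) ^ (-σ)) else 1
  have hq : HasProd q (∏ p ∈ hfin.toFinset, q p) :=
    hasProd_prod_of_ne_finset_one fun p hp => by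
      have : ¬ (p : ℕ) ≤ P := by simpa using hp
      simp [q, this]
  have h1 := realSeries_hasProd (r := fun _ => 1) (by simp) hσ
  have h2 := realSeries_hasProd (r := fun p => if p ≤ P then -1 else 1)
    (fun p => by split_ifs <;> simp) hσ
  have h3 : realSeries (fun p => if p ≤ P then -1 else 1) σ =
      (∏ p ∈ hfin.toFinset, q p) * realSeries (fun _ => 1) σ := by
    refine HasProd.unique h2 ((congrArg (fun f => HasProd f _) (funext fun p => ?_)).mp (hq.mul h1))
    obtain ⟨hx0, hx1⟩ := prime_rpow_neg_mem_Ioc p hσ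
    by_cases hp : (p : ℕ) ≤ P
    · have e1 : 1 - (p : ℝ) ^ (-σ) ≠ 0 := by linarith
      have e2 : 1 + (p : ℝ) ^ (-σ) ≠ 0 := by linarith
      simp only [q, hp, if_true, one_mul, neg_mul, sub_neg_eq_add]
      field_simp
    · simp [q, hp]
  rw [h3]
  refine mul_le_mul_of_nonneg_right (Finset.prod_le_prod (fun _ _ => by norm_num) fun p hp => ?_) ?_
  · obtain ⟨hx0, hx1⟩ := prime_rpow_neg_mem_Ioc p hσ
    have hp : (p : ℕ) ≤ P := by simpa using hp
    simp only [q, hp, if_true]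
    rw [div_le_div_iff₀ (by norm_num) (by linarith)]
    linarith
  · refine tsum_nonneg fun n => ?_
    rw [primeExt_one_left, one_mul]
    positivity

theorem tendsto_realSeries_neg_one {σ : ℝ} (hσ : 1 < σ) :
    Tendsto (fun P : ℕ => realSeries (fun p => if p ≤ P then -1 else 1) σ) atTop
      (𝓝 (realSeries (fun _ => -1) σ)) := by
  refine tendsto_tsum_of_dominated_convergence (bound := fun n : ℕ => (n : ℝ) ^ (-σ))
    (Real.summable_nat_rpow.mpr (by linarith)) (fun n => ?_) (Eventually.of_forall fun P n => ?_)
  · refine tendsto_const_nhds.congr' ?_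
    filter_upwards [eventually_ge_atTop n] with P hP
    congr 1
    exact primeExt_congr fun p _ hp => by rw [if_pos (hp.trans hP)]
  · rw [norm_mul, norm_primeExt (fun p => by split_ifs <;> simp), one_mul,
      Real.norm_of_nonneg (Real.rpow_nonneg n.cast_nonneg _)]

theorem one_lt_realSeries_one {σ : ℝ} (hσ : 1 < σ) : 1 < realSeries (fun _ => 1) σ := by
  have hs : Summable fun n : ℕ => primeExt (fun _ => (1 : ℝ)) n * (n : ℝ) ^ (-σ) :=
    summable_mul_rpow_neg (C := 1) (fun n => by simp [primeExt_one_left]) hσ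
  have h := hs.sum_le_tsum {1, 2} fun n _ => by
    rw [primeExt_one_left, one_mul]
    positivity
  have h2 : (0 : ℝ) < 2 ^ (-σ) := by positivity
  simp [primeExt_one_left] at h
  rw [realSeries]
  simp only [primeExt_one_left, one_mul]
  linarith

theorem realSeries_one_two_mul_le {σ : ℝ} (hσ : 1 < σ) :
    realSeries (fun _ => 1) (2 * σ) ≤ realSeries (fun _ => 1) σ := by
  have hs (σ : ℝ) (hσ : 1 < σ) :
      Summable fun n : ℕ => primeExt (fun _ => (1 : ℝ)) n * (n : ℝ) ^ (-σ) :=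
    summable_mul_rpow_neg (C := 1) (fun n => by simp [primeExt_one_left]) hσ
  refine (hs _ (by linarith)).tsum_le_tsum (fun n => ?_) (hs _ hσ)
  rw [primeExt_one_left, one_mul, one_mul]
  rcases eq_or_ne n 0 with rfl | hn
  · simp [Real.zero_rpow (show -σ ≠ 0 by linarith), Real.zero_rpow (show -(2 * σ) ≠ 0 by linarith)]
  · exact Real.rpow_le_rpow_of_exponent_le
      (by exact_mod_cast Nat.one_le_iff_ne_zero.mpr hn) (by linarith)

theorem tendsto_realSeries_one : Tendsto (realSeries fun _ => 1) (𝓝[>] 1) atTop := by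
  have h0 : Tendsto (fun s : ℝ => (s - 1)⁻¹) (𝓝[>] 1) atTop := by
    refine tendsto_inv_nhdsGT_zero.comp (tendsto_nhdsWithin_iff.mpr ⟨?_, ?_⟩)
    · have : Tendsto (fun s : ℝ => s - 1) (𝓝 1) (𝓝 (1 - 1)) := tendsto_id.sub_const 1
      rw [sub_self] at this
      exact this.mono_left nhdsWithin_le_nhds
    · filter_upwards [self_mem_nhdsWithin] with s hs
      exact sub_pos.mpr (mem_Ioi.mp hs)
  refine (h0.atTop_mul_pos one_pos tendsto_sub_mul_tsum_nat_rpow).congr' ?_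
  filter_upwards [self_mem_nhdsWithin] with s hs
  rw [inv_mul_cancel_left₀ (sub_pos.mpr (mem_Ioi.mp hs)).ne', realSeries]
  refine tsum_congr fun n => ?_
  rw [primeExt_one_left, one_mul, Real.rpow_neg n.cast_nonneg, one_div]

theorem exists_realSeries_sign_change {δ : ℝ} (hδ : 0 < δ) :
    ∃ P : ℕ, ∃ σ₁ σ₂ : ℝ, 1 < σ₁ ∧ σ₁ < σ₂ ∧ σ₂ < 1 + δ ∧
      realSeries (fun _ => 1) (2 * σ₁) < realSeries (fun p => if p ≤ P then -1 else 1) σ₁ ^ 2 ∧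
      realSeries (fun p => if p ≤ P then -1 else 1) σ₂ ^ 2 < realSeries (fun _ => 1) (2 * σ₂) := by
  set σ₂ := 1 + δ / 2 with hσ₂
  have h2 : 1 < σ₂ := by linarith
  have hlim : realSeries (fun _ => -1) σ₂ ^ 2 < realSeries (fun _ => 1) (2 * σ₂) := by
    have h1 := one_lt_realSeries_one h2
    have h3 := one_lt_realSeries_one (show 1 < 2 * σ₂ by linarith)
    have h4 := realSeries_one_two_mul_le h2
    have h5 := realSeries_neg_one_mul h2
    set A := realSeries (fun _ => -1) σ₂
    set Z := realSeries (fun _ => 1) σ₂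
    have hA1 : A ≤ 1 := by nlinarith
    have hA0 : 0 ≤ A := by nlinarith
    nlinarith
  obtain ⟨P, hP⟩ := (((tendsto_realSeries_neg_one h2).pow 2).eventually_lt_const hlim).exists
  obtain ⟨c, hc, hcZ⟩ := exists_mul_le_realSeries P
  obtain ⟨σ₁, hZ, h1, h12⟩ := ((tendsto_realSeries_one.eventually_gt_atTop (1 / c ^ 2)).and
    (Ioo_mem_nhdsGT h2)).exists
  refine ⟨P, σ₁, σ₂, h1, h12, by linarith, ?_, hP⟩
  have h3 := hcZ σ₁ h1
  have h4 := realSeries_one_two_mul_le h1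
  have h5 := one_lt_realSeries_one h1
  set Z := realSeries (fun _ => 1) σ₁
  rw [div_lt_iff₀ (by positivity)] at hZ
  calc _ ≤ Z := h4
    _ < Z * (Z * c ^ 2) := by nlinarith
    _ = (c * Z) ^ 2 := by ring
    _ ≤ _ := by gcongr

theorem LSeries_primeExt_ofReal {r : ℕ → ℝ} {σ : ℝ} (hσ : 1 < σ) :
    LSeries (primeExt fun p => (r p : ℂ)) σ = realSeries r σ := by
  rw [realSeries, ofReal_tsum]
  refine tsum_congr fun n => ?_
  rcases eq_or_ne n 0 with rfl | hn
  · simp [Real.zero_rpow (show -σ ≠ 0 by linarith)]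
  · rw [LSeries.term_of_ne_zero hn, ofReal_mul, ofReal_cpow n.cast_nonneg, ofReal_neg, cpow_neg,
      ofReal_natCast, div_eq_mul_inv]
    congr 1
    exact (map_primeExt (ofRealHom : ℝ →* ℂ) r n).symm

theorem riemannZeta_ofReal_eq_realSeries {σ : ℝ} (hσ : 1 < σ) :
    riemannZeta σ = realSeries (fun _ => 1) σ := by
  rw [← LSeries_primeExt_ofReal hσ, ← LSeries_one_eq_riemannZeta (by simpa using hσ)]
  congr 1
  ext n
  simp [primeExt_one_left]

theorem analyticOnNhd_LSeries_sq_sub_zeta {f : ℕ → ℂ} (hf : ∀ n, ‖f n‖ ≤ 1) :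
    AnalyticOnNhd ℂ (fun s => LSeries f s ^ 2 - riemannZeta (2 * s)) {s | 1 < s.re} := by
  refine DifferentiableOn.analyticOnNhd (fun s hs => ?_) (isOpen_lt continuous_const continuous_re)
  have hs : 1 < s.re := hs
  have h1 : LSeries.abscissaOfAbsConv f < s.re :=
    (LSeries.abscissaOfAbsConv_le_of_le_const ⟨1, fun n _ => hf n⟩).trans_lt (by exact_mod_cast hs)
  have h2 : (2 * s) ≠ 1 := fun h => by
    have := congrArg re h
    simp at this
    linarith
  have h3 : DifferentiableAt ℂ (fun s => riemannZeta (2 * s)) s :=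
    (differentiableAt_riemannZeta h2).comp s (differentiableAt_id.const_mul 2)
  exact (((LSeries_hasDerivAt h1).differentiableAt.pow 2).sub h3).differentiableWithinAt

/-- Some function `L(s, χ)² - ζ(2s)`, with `χ` completely multiplicative and of values `±1`, has a
zero in `(1, 1 + δ)` without vanishing identically. -/
theorem exists_zero_LSeries_sq_sub_zeta {δ : ℝ} (hδ : 0 < δ) :
    ∃ y : ℕ → ℂ, (∀ p, y p ^ 2 = 1) ∧ ∃ σ₀ σ₂ : ℝ, 1 < σ₀ ∧ σ₀ < 1 + δ ∧ 1 < σ₂ ∧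
      LSeries (primeExt y) σ₀ ^ 2 - riemannZeta (2 * σ₀) = 0 ∧
      LSeries (primeExt y) σ₂ ^ 2 - riemannZeta (2 * σ₂) ≠ 0 := by
  obtain ⟨P, σ₁, σ₂, h1, h12, h2, hpos, hneg⟩ := exists_realSeries_sign_change hδ
  set r : ℕ → ℝ := fun p => if p ≤ P then -1 else 1 with hr
  have hr1 (p) : ‖(r p : ℂ)‖ = 1 := by
    simp only [hr]; split_ifs <;> simp
  set h : ℝ → ℝ := fun σ => realSeries r σ ^ 2 - realSeries (fun _ => 1) (2 * σ) with hh
  have hval (σ : ℝ) (hσ : 1 < σ) :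
      LSeries (primeExt fun p => (r p : ℂ)) σ ^ 2 - riemannZeta (2 * σ) = h σ := by
    rw [LSeries_primeExt_ofReal hσ, ← ofReal_ofNat, ← ofReal_mul,
      riemannZeta_ofReal_eq_realSeries (by linarith)]
    push_cast [hh]
    rfl
  have hcont : ContinuousOn h (Icc σ₁ σ₂) := by
    have hg := (analyticOnNhd_LSeries_sq_sub_zeta
      (f := primeExt fun p => (r p : ℂ)) fun n => (norm_primeExt hr1 n).le).continuousOn
    have := continuous_re.comp_continuousOn (hg.comp continuous_ofReal.continuousOn
      (s := Icc σ₁ σ₂) fun σ hσ => by simpa using h1.trans_le hσ.1)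
    refine this.congr fun σ hσ => ?_
    simp only [Function.comp_apply, hval σ (h1.trans_le hσ.1), ofReal_re]
  obtain ⟨σ₀, hσ₀, h0⟩ := intermediate_value_Icc' h12.le hcont
    (show (0 : ℝ) ∈ Icc (h σ₂) (h σ₁) from ⟨by simp only [hh]; linarith, by simp only [hh]; linarith⟩)
  refine ⟨fun p => (r p : ℂ), fun p => ?_, σ₀, σ₂, h1.trans_le hσ₀.1, hσ₀.2.trans_lt h2,
    h1.trans h12, ?_, ?_⟩
  · simp only [hr]; split_ifs <;> simp
  · rw [hval σ₀ (h1.trans_le hσ₀.1), h0, ofReal_zero]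
  · rw [hval σ₂ (h1.trans h12)]
    exact_mod_cast (show h σ₂ < 0 by simp only [hh]; linarith).ne

theorem norm_sq_sub_zeta_sub_le {f : ℕ → ℂ} (hf : ∀ n, f n ^ 2 = 1) {s : ℂ} {σ : ℝ}
    (hσ : 1 < σ) (hs : σ ≤ s.re) (τ : ℝ) :
    ‖(riemannZeta (s + τ * I) ^ 2 - riemannZeta (2 * (s + τ * I))) -
        (LSeries f s ^ 2 - riemannZeta (2 * s))‖ ≤
      (2 * (∑' n : ℕ, (n : ℝ) ^ (-σ)) + 2) *
        ∑' n : ℕ, ‖twist τ n - f n‖ * (n : ℝ) ^ (-σ) := by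
  have hs1 := hσ.trans_le hs
  have h2s : σ ≤ (2 * s).re := by simp; linarith
  have hf1 (n) : ‖f n‖ = 1 := by
    have := congrArg norm (hf n)
    rw [norm_pow, norm_one] at this
    exact (pow_eq_one_iff_of_nonneg (norm_nonneg _) two_ne_zero).mp this
  have ht1 (n) : ‖twist τ n‖ ≤ 1 := (norm_twist τ n).le
  have hzeta : riemannZeta (2 * s) = LSeries (fun n => f n ^ 2) (2 * s) := by
    rw [← LSeries_one_eq_riemannZeta (hσ.trans_le h2s)]
    congr 1
    ext n
    rw [hf n, Pi.one_apply]
  rw [riemannZeta_add_mul_I τ hs1, riemannZeta_two_mul_add_mul_I τ hs1, hzeta]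
  set D := ∑' n : ℕ, ‖twist τ n - f n‖ * (n : ℝ) ^ (-σ) with hD
  set Z := ∑' n : ℕ, (n : ℝ) ^ (-σ)
  have hd := norm_LSeries_sub_le ht1 (fun n => (hf1 n).le) hσ hs
  have hsum : Summable fun n : ℕ => ‖twist τ n - f n‖ * (n : ℝ) ^ (-σ) := by
    refine summable_mul_rpow_neg (C := 2) (fun n => ?_) hσ
    rw [abs_norm]
    exact (norm_sub_le _ _).trans (by linarith [ht1 n, hf1 n])
  have hpt (n : ℕ) : ‖twist τ n ^ 2 - f n ^ 2‖ ≤ 2 * ‖twist τ n - f n‖ := by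
    rw [sq_sub_sq, norm_mul]
    gcongr
    exact (norm_add_le _ _).trans (by linarith [ht1 n, hf1 n])
  have hd2 : ‖LSeries (fun n => twist τ n ^ 2) (2 * s) - LSeries (fun n => f n ^ 2) (2 * s)‖
      ≤ 2 * D := by
    refine (norm_LSeries_sub_le (fun n => ?_) (fun n => ?_) hσ h2s).trans ?_
    · rw [norm_pow, norm_twist, one_pow]
    · rw [norm_pow, hf1, one_pow]
    · have hle (n : ℕ) : ‖twist τ n ^ 2 - f n ^ 2‖ * (n : ℝ) ^ (-σ) ≤
          2 * (‖twist τ n - f n‖ * (n : ℝ) ^ (-σ)) := by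
        rw [← mul_assoc]
        exact mul_le_mul_of_nonneg_right (hpt n) (Real.rpow_nonneg n.cast_nonneg _)
      rw [hD, ← tsum_mul_left]
      refine Summable.tsum_le_tsum hle (Summable.of_nonneg_of_le (fun n => ?_) hle
        (hsum.mul_left 2)) (hsum.mul_left 2)
      exact mul_nonneg (norm_nonneg _) (Real.rpow_nonneg n.cast_nonneg _)
  have hZ1 := norm_LSeries_le ht1 hσ hs
  have hZ2 := norm_LSeries_le (fun n => (hf1 n).le) hσ hs
  have hsq : ‖LSeries (twist τ) s ^ 2 - LSeries f s ^ 2‖ ≤ 2 * Z * D := by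
    rw [sq_sub_sq, norm_mul]
    gcongr
    exact (norm_add_le _ _).trans (by linarith)
  rw [sub_sub_sub_comm]
  exact (norm_sub_le _ _).trans (by linarith)

/-- A form of Hurwitz's theorem: a function close to `g` on a disc has a zero in this disc, provided
that `g` vanishes at the centre and is bounded below on the circle. -/
theorem exists_zero_of_norm_sub_lt {G g : ℂ → ℂ} {U : Set ℂ} (hU : IsPreconnected U)
    (hG : AnalyticOnNhd ℂ G U) {z₀ : ℂ} {r m : ℝ} (hr : 0 < r) (hm : 0 < m)
    (hball : Metric.closedBall z₀ r ⊆ U) (hg0 : g z₀ = 0)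
    (hgm : ∀ z ∈ Metric.sphere z₀ r, m ≤ ‖g z‖)
    (hclose : ∀ z ∈ Metric.closedBall z₀ r, ‖G z - g z‖ < m / 4) :
    ∃ z ∈ Metric.closedBall z₀ r, G z = 0 := by
  have hz₀ : z₀ ∈ Metric.closedBall z₀ r := Metric.mem_closedBall_self hr.le
  have hG0 : ‖G z₀‖ < m / 4 := by simpa [hg0] using hclose z₀ hz₀
  have hsphere (z) (hz : z ∈ Metric.sphere z₀ r) : m / 2 ≤ ‖G z - G z₀‖ := by
    have h1 := hclose z (Metric.sphere_subset_closedBall hz)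
    have h2 := hgm z hz
    have h3 : ‖g z‖ ≤ ‖G z - G z₀‖ + ‖G z₀‖ + ‖G z - g z‖ := by
      have e : g z = (G z - G z₀) + G z₀ - (G z - g z) := by ring
      conv_lhs => rw [e]
      exact (norm_sub_le _ _).trans (by gcongr; exact norm_add_le _ _)
    linarith
  have hd : DiffContOnCl ℂ G (Metric.ball z₀ r) := by
    refine DifferentiableOn.diffContOnCl ?_
    rw [closure_ball z₀ hr.ne']
    exact hG.differentiableOn.mono hball
  have hfreq : ∃ᶠ z in 𝓝 z₀, G z ≠ G z₀ := by
    intro h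
    have heq := hG.eqOn_of_preconnected_of_eventuallyEq (g := fun _ => G z₀)
      analyticOnNhd_const hU (hball hz₀) (h.mono fun z hz => not_not.mp hz)
    obtain ⟨z, hz⟩ := NormedSpace.sphere_nonempty (x := z₀).mpr hr.le
    have := hsphere z hz
    rw [heq (hball (Metric.sphere_subset_closedBall hz)), sub_self, norm_zero] at this
    linarith
  exact hd.ball_subset_image_closedBall hr hsphere hfreq
    (by rw [Metric.mem_ball, dist_zero_left]; linarith)

/-- Zeros of `ζ(s)² - ζ(2s)` in the strip `1 < Re s < 1 + δ` have relatively dense ordinates. -/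
theorem exists_zero_zeta_sq_sub_zeta {δ : ℝ} (hδ : 0 < δ) :
    ∃ H : ℝ, 0 < H ∧ ∀ a : ℝ, ∃ s : ℂ, 1 < s.re ∧ s.re < 1 + δ ∧ s.im ∈ Ico a (a + H) ∧
      riemannZeta s ^ 2 - riemannZeta (2 * s) = 0 := by
  obtain ⟨y, hy, σ₀, σ₂, h0, h0δ, h2, hzero, hne⟩ := exists_zero_LSeries_sq_sub_zeta hδ
  have hy1 (p) : ‖y p‖ = 1 := by
    have := congrArg norm (hy p)
    rw [norm_pow, norm_one] at this
    exact (pow_eq_one_iff_of_nonneg (norm_nonneg _) two_ne_zero).mp this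
  have hf (n) : primeExt y n ^ 2 = 1 := by
    have := map_primeExt (powMonoidHom 2 : ℂ →* ℂ) y n
    simpa [hy, primeExt_one_left] using this
  set g : ℂ → ℂ := fun s => LSeries (primeExt y) s ^ 2 - riemannZeta (2 * s) with hg
  set U : Set ℂ := {s | 1 < s.re} with hUdef
  have hU : IsPreconnected U := (convex_halfSpace_re_gt 1).isPreconnected
  have hgan : AnalyticOnNhd ℂ g U :=
    analyticOnNhd_LSeries_sq_sub_zeta fun n => (norm_primeExt hy1 n).le
  have hev : ∀ᶠ z in 𝓝[≠] (σ₀ : ℂ), g z ≠ 0 := by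
    by_contra hcon
    refine hne (hgan.eqOn_zero_of_preconnected_of_frequently_eq_zero hU (z₀ := (σ₀ : ℂ))
      (by simpa [hUdef] using h0) ?_ (show (σ₂ : ℂ) ∈ U by simpa [hUdef] using h2))
    exact (not_eventually.mp hcon).mono fun z hz => not_not.mp hz
  obtain ⟨R, hR, hRg⟩ := Metric.mem_nhdsWithin_iff.mp hev
  obtain ⟨r, hr, hrR, hr1, hr2⟩ : ∃ r : ℝ, 0 < r ∧ r < R ∧ r < σ₀ - 1 ∧ r < 1 + δ - σ₀ := by
    obtain ⟨r, hr, hr'⟩ := exists_between (show 0 < min R (min (σ₀ - 1) (1 + δ - σ₀)) from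
      lt_min hR (lt_min (by linarith) (by linarith)))
    rw [lt_min_iff, lt_min_iff] at hr'
    exact ⟨r, hr, hr'⟩
  have hre (z) (hz : z ∈ Metric.closedBall (σ₀ : ℂ) r) : |z.re - σ₀| ≤ r ∧ |z.im| ≤ r := by
    rw [Metric.mem_closedBall, dist_eq_norm] at hz
    exact ⟨by simpa using (abs_re_le_norm _).trans hz, by simpa using (abs_im_le_norm _).trans hz⟩
  have hball : Metric.closedBall (σ₀ : ℂ) r ⊆ U := fun z hz => by
    have := (abs_le.mp (hre z hz).1).1
    change 1 < z.re
    linarith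
  obtain ⟨w, hw, hmin⟩ := (isCompact_sphere (σ₀ : ℂ) r).exists_isMinOn
    (NormedSpace.sphere_nonempty.mpr hr.le)
    (hgan.continuousOn.mono (Metric.sphere_subset_closedBall.trans hball)).norm
  have hm : 0 < ‖g w‖ := by
    rw [norm_pos_iff]
    refine hRg ⟨?_, Metric.ne_of_mem_sphere hw hr.ne'⟩
    rw [Metric.mem_ball, Metric.mem_sphere.mp hw]
    exact hrR
  set m := ‖g w‖
  set σ := σ₀ - r with hσdef
  have hσ : 1 < σ := by linarith
  set K := 2 * (∑' n : ℕ, (n : ℝ) ^ (-σ)) + 2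
  have hK : 0 < K := by
    have : 0 ≤ ∑' n : ℕ, (n : ℝ) ^ (-σ) := tsum_nonneg fun n => Real.rpow_nonneg n.cast_nonneg _
    positivity
  obtain ⟨L, hL, hτ⟩ := exists_twist_close hy1 hσ (ε := m / 4 / K) (by positivity)
  refine ⟨L + 2 * r + 1, by positivity, fun a => ?_⟩
  obtain ⟨τ, hτa, hτD⟩ := hτ (a + r)
  rw [lt_div_iff₀' hK] at hτD
  have hGan : AnalyticOnNhd ℂ
      (fun s => riemannZeta (s + τ * I) ^ 2 - riemannZeta (2 * (s + τ * I))) U := by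
    have h1 : AnalyticOnNhd ℂ (fun s => LSeries (fun _ => 1) s ^ 2 - riemannZeta (2 * s)) U :=
      analyticOnNhd_LSeries_sq_sub_zeta (by simp)
    have h2 : AnalyticOnNhd ℂ (fun s => riemannZeta s ^ 2 - riemannZeta (2 * s)) U :=
      h1.congr (isOpen_lt continuous_const continuous_re) fun s hs => by
        simp only [← LSeries_one_eq_riemannZeta hs]
        rfl
    exact h2.comp (analyticOnNhd_id.add analyticOnNhd_const) fun s hs => by
      simpa [hUdef] using hs
  obtain ⟨z, hz, hGz⟩ := exists_zero_of_norm_sub_lt hU hGan hr hm hball hzero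
    (fun z hz => hmin hz) fun z hz => (norm_sq_sub_zeta_sub_le hf hσ
      (by have := (abs_le.mp (hre z hz).1).1; linarith) τ).trans_lt hτD
  obtain ⟨hz1, hz2⟩ := hre z hz
  rw [abs_le] at hz1 hz2
  refine ⟨z + τ * I, ?_, ?_, ⟨?_, ?_⟩, hGz⟩ <;> simp
  · linarith
  · linarith
  · linarith [hτa.1]
  · linarith [hτa.2]

end

/-- For every `δ > 0` the function `ζ(s)² - ζ(2s)` has at least `cT`
zeros in `{1 < Re s < 1+δ, Im s ∈ [0,T]}`; in particular the Euler–Zagier double zeta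
value `ζ₂(s,s) = (ζ(s)² - ζ(2s))/2` has infinitely many zeros in `Re s > 1`. -/
theorem statement_15 (δ : ℝ) (hδ : 0 < δ) :
    (∃ c : ℝ, 0 < c ∧ ∃ T₀ : ℝ, 0 < T₀ ∧ ∀ T : ℝ, T₀ ≤ T →
      AtLeastCard {s : ℂ | 1 < s.re ∧ s.re < 1 + δ ∧ s.im ∈ Set.Icc 0 T ∧
        riemannZeta s ^ 2 - riemannZeta (2 * s) = 0} (c * T)) ∧
    {s : ℂ | 1 < s.re ∧ (riemannZeta s ^ 2 - riemannZeta (2 * s)) / 2 = 0}.Infinite := by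
  obtain ⟨H, hH, hzero⟩ := exists_zero_zeta_sq_sub_zeta hδ
  choose s hs1 hsδ hsim hs0 using fun k : ℕ => hzero (k * H)
  have hinj : Function.Injective s := by
    refine Function.Injective.of_lt_imp_ne fun j k hjk hs => ?_
    have h1 := (hsim j).2
    have h2 := (hsim k).1
    rw [hs] at h1
    have h3 : ((j : ℝ) + 1) * H ≤ k * H := by
      gcongr
      exact_mod_cast hjk
    linarith
  refine ⟨⟨1 / (2 * H), by positivity, 2 * H, by positivity, fun T hT => ?_⟩,
    Set.infinite_of_injective_forall_mem hinj fun k => ⟨hs1 k, by rw [hs0 k, zero_div]⟩⟩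
  have hTH : 2 ≤ T / H := by rwa [le_div_iff₀ hH]
  refine ⟨(Finset.range ⌊T / H⌋₊).image s, fun z hz => ?_, ?_⟩
  · obtain ⟨k, hk, rfl⟩ := Finset.mem_image.mp (Finset.mem_coe.mp hz)
    refine ⟨hs1 k, hsδ k, ⟨le_trans (by positivity) (hsim k).1, ?_⟩, hs0 k⟩
    have h1 : ((k : ℝ) + 1) ≤ T / H :=
      le_trans (by exact_mod_cast Finset.mem_range.mp hk) (Nat.floor_le (by linarith))
    rw [le_div_iff₀ hH] at h1
    linarith [(hsim k).2]
  · rw [Finset.card_image_of_injective _ hinj, Finset.card_range]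
    have h1 := Nat.lt_floor_add_one (T / H)
    have h2 : 1 / (2 * H) * T = T / H / 2 := by field_simp
    rw [h2]
    linarith
end
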